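/- Let A be a basic indecomposable artin algebra and Γ a cycle-finite component of the cyclic quiver _cΓ_A. Consider a decomposition A = P_Γ ⊕ Q_Γ of A in mod A such that the simple summands of P_Γ/rad P_Γ are exactly the simple composition factors of the indecomposable modules in Γ. Then the algebras supp(Γ) = A/t_A(Γ) and End_A(P_Γ) are isomorphic. -/

import Mathlib

/-!
Common framework: finite length modules over a ring, the radical of the module
category, cycles of indecomposable modules, Auslander-Reiten quivers,
translation quivers notions, and classes of artin algebras.
Right `A`-modules are formalized as left `Aᵐᵒᵖ`-modules.
-/

universe u

/-- A bundled object of `mod R`: a finite length `R`-module. -/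
structure ModA (R : Type u) [Ring R] : Type (u + 1) where
  M : Type u
  [acg : AddCommGroup M]
  [mod : Module R M]
  finLen : IsFiniteLength R M

attribute [instance] ModA.acg ModA.mod

/-- A bundled (not necessarily finite length) `R`-module. -/
structure RawMod (R : Type u) [Ring R] : Type (u + 1) where
  M : Type u
  [acg : AddCommGroup M]
  [mod : Module R M]

attribute [instance] RawMod.acg RawMod.mod

/-- A module is indecomposable iff it is nonzero and its endomorphism ring has no
nontrivial idempotents. -/
def IsIndecMod (R : Type u) [Ring R] (M : Type u) [AddCommGroup M] [Module R M] : Prop :=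
  Nontrivial M ∧ ∀ f : Module.End R M, f * f = f → f = 0 ∨ f = 1

namespace ModA

variable {R : Type u} [Ring R]

/-- Indecomposability of an object of `mod R`. -/
def IsIndec (X : ModA R) : Prop := IsIndecMod R X.M

/-- Isomorphism of objects of `mod R`. -/
def Iso (X Y : ModA R) : Prop := Nonempty (X.M ≃ₗ[R] Y.M)

end ModA

/-- Membership in the radical `rad(X, Y)` of the category `mod R`: a map `f : X → Y`
belongs to the radical iff for every indecomposable `Z` and all `g : Z → X`, `h : Y → Z`
the composite `h ∘ f ∘ g` is not an isomorphism. -/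
def InRad {R : Type u} [Ring R] {X Y : ModA R} (f : X.M →ₗ[R] Y.M) : Prop :=
  ∀ Z : ModA R, Z.IsIndec → ∀ (g : Z.M →ₗ[R] X.M) (h : Y.M →ₗ[R] Z.M),
    ¬Function.Bijective (h.comp (f.comp g))

/-- The powers `rad^n` of the radical of `mod R`. -/
def radPow (R : Type u) [Ring R] : ℕ → ∀ X Y : ModA R, AddSubgroup (X.M →ₗ[R] Y.M)
  | 0, _, _ => ⊤
  | n + 1, X, Y => AddSubgroup.closure
      {f | ∃ (Z : ModA R) (g : X.M →ₗ[R] Z.M) (h : Z.M →ₗ[R] Y.M),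
        InRad g ∧ h ∈ radPow R n Z Y ∧ f = h.comp g}

/-- Membership in the infinite radical `rad^∞ = ⋂ₙ radⁿ` of `mod R`. -/
def InRadInf {R : Type u} [Ring R] {X Y : ModA R} (f : X.M →ₗ[R] Y.M) : Prop :=
  ∀ n : ℕ, f ∈ radPow R n X Y

/-- A cycle in `ind R`: a sequence of nonzero nonisomorphisms
`M₀ → M₁ → ⋯ → M_{r-1} → M_r = M₀` between indecomposable modules. -/
structure ModCycle (R : Type u) [Ring R] : Type (u + 1) where
  len : ℕ
  len_pos : 0 < len
  obj : Fin (len + 1) → ModA R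
  obj_indec : ∀ i, (obj i).IsIndec
  closed : obj (Fin.last len) = obj 0
  hom : ∀ i : Fin len, (obj i.castSucc).M →ₗ[R] (obj i.succ).M
  hom_ne_zero : ∀ i, hom i ≠ 0
  hom_not_iso : ∀ i, ¬Function.Bijective (hom i)

/-- A cycle is finite if none of its homomorphisms lies in the infinite radical. -/
def ModCycle.IsFiniteCycle {R : Type u} [Ring R] (c : ModCycle R) : Prop :=
  ∀ i, ¬InRadInf (c.hom i)

/-- The cycle passes through the module `M`. -/
def ModCycle.Passes {R : Type u} [Ring R] (c : ModCycle R) (M : ModA R) : Prop :=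
  ∃ i, (c.obj i).Iso M

/-- A module is cycle-finite if it lies on a cycle and every cycle through it is finite. -/
def IsCycleFiniteModule {R : Type u} [Ring R] (M : ModA R) : Prop :=
  (∃ c : ModCycle R, c.Passes M) ∧ ∀ c : ModCycle R, c.Passes M → c.IsFiniteCycle

/-- A module is directing if it lies on no cycle. -/
def IsDirectingModule {R : Type u} [Ring R] (M : ModA R) : Prop :=
  ¬∃ c : ModCycle R, c.Passes M

section Irreducible

variable {R : Type u} [Ring R]

/-- `f` is a split monomorphism (a section). -/
def SplitMonoMap {X Y : ModA R} (f : X.M →ₗ[R] Y.M) : Prop :=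
  ∃ r : Y.M →ₗ[R] X.M, r.comp f = LinearMap.id

/-- `f` is a split epimorphism (a retraction). -/
def SplitEpiMap {X Y : ModA R} (f : X.M →ₗ[R] Y.M) : Prop :=
  ∃ s : Y.M →ₗ[R] X.M, f.comp s = LinearMap.id

/-- `f` is an irreducible homomorphism. -/
def IsIrred {X Y : ModA R} (f : X.M →ₗ[R] Y.M) : Prop :=
  ¬SplitMonoMap f ∧ ¬SplitEpiMap f ∧
    ∀ (Z : ModA R) (g : X.M →ₗ[R] Z.M) (h : Z.M →ₗ[R] Y.M), h.comp g = f →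
      SplitMonoMap g ∨ SplitEpiMap h

end Irreducible

/-- An almost split (Auslander-Reiten) sequence `0 → l → m → r → 0` in `mod R`. -/
structure AlmostSplitSeq (R : Type u) [Ring R] : Type (u + 1) where
  l : ModA R
  m : ModA R
  r : ModA R
  f : l.M →ₗ[R] m.M
  g : m.M →ₗ[R] r.M
  inj : Function.Injective f
  surj : Function.Surjective g
  exact : LinearMap.range f = LinearMap.ker g
  not_split : ¬SplitEpiMap g
  l_indec : l.IsIndec
  r_indec : r.IsIndec
  right_almost : ∀ (Z : ModA R) (h : Z.M →ₗ[R] r.M), ¬SplitEpiMap h →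
      ∃ h' : Z.M →ₗ[R] m.M, g.comp h' = h
  left_almost : ∀ (Z : ModA R) (h : l.M →ₗ[R] Z.M), ¬SplitMonoMap h →
      ∃ h' : m.M →ₗ[R] Z.M, h'.comp f = h

/-- `N ≅ τ M` for the Auslander-Reiten translation `τ = DTr`. -/
def IsTauOf {R : Type u} [Ring R] (N M : ModA R) : Prop :=
  ∃ s : AlmostSplitSeq R, s.l.Iso N ∧ s.r.Iso M

/-- The indecomposable objects of `mod R`. -/
def IndecModA (R : Type u) [Ring R] := {X : ModA R // X.IsIndec}

/-- Isomorphism is an equivalence relation on indecomposable modules. -/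
def isoSetoid (R : Type u) [Ring R] : Setoid (IndecModA R) where
  r X Y := X.1.Iso Y.1
  iseqv :=
    { refl := fun X => ⟨LinearEquiv.refl R X.1.M⟩
      symm := fun h => h.elim fun e => ⟨e.symm⟩
      trans := fun h h' => h.elim fun e => h'.elim fun e' => ⟨e.trans e'⟩ }

/-- The vertices of the Auslander-Reiten quiver `Γ_R`: isomorphism classes of
indecomposable modules in `mod R`. -/
def ARVertex (R : Type u) [Ring R] := Quotient (isoSetoid R)

/-- The vertex of `Γ_R` given by an indecomposable module. -/
def ARVertex.mk {R : Type u} [Ring R] (X : IndecModA R) : ARVertex R :=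
  Quotient.mk (isoSetoid R) X

section ARQuiver

variable {R : Type u} [Ring R]

/-- The arrows of the Auslander-Reiten quiver: `x → y` iff there is an irreducible
homomorphism between representatives. -/
def ARArrow (x y : ARVertex R) : Prop :=
  ∃ (X Y : IndecModA R) (f : X.1.M →ₗ[R] Y.1.M),
    IsIrred f ∧ ARVertex.mk X = x ∧ ARVertex.mk Y = y

/-- `TauRel x y` iff `x = τ y` in the Auslander-Reiten quiver. -/
def TauRel (x y : ARVertex R) : Prop :=
  ∃ X Y : IndecModA R, ARVertex.mk X = x ∧ ARVertex.mk Y = y ∧ IsTauOf X.1 Y.1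

/-- A vertex given by an (indecomposable) projective module. -/
def IsProjVertex (x : ARVertex R) : Prop :=
  ∃ X : IndecModA R, ARVertex.mk X = x ∧ Module.Projective R X.1.M

/-- A vertex given by an (indecomposable) injective module. -/
def IsInjVertex (x : ARVertex R) : Prop :=
  ∃ X : IndecModA R, ARVertex.mk X = x ∧ Module.Injective R X.1.M

/-- The vertex lies on an oriented cycle of `Γ_R`. -/
def OnARCycle (x : ARVertex R) : Prop := Relation.TransGen ARArrow x x

/-- An edge (arrow in either direction) of the underlying graph of `Γ_R`. -/
def ARStep (x y : ARVertex R) : Prop := ARArrow x y ∨ ARArrow y x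

/-- `D` is a connected component of the full subquiver of `Γ_R` on the vertex set `S`. -/
def IsComponentOf (S D : Set (ARVertex R)) : Prop :=
  D ⊆ S ∧ D.Nonempty ∧
    (∀ x ∈ D, ∀ y ∈ S, ARStep x y → y ∈ D) ∧
    ∀ x ∈ D, ∀ y ∈ D, Relation.ReflTransGen (fun a b => a ∈ S ∧ b ∈ S ∧ ARStep a b) x y

/-- `C` is a connected component of `Γ_R`. -/
def IsARComponent (C : Set (ARVertex R)) : Prop := IsComponentOf Set.univ C

/-- The vertex lies on an oriented cycle all of whose vertices belong to `S`. -/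
def OnCycleIn (S : Set (ARVertex R)) (x : ARVertex R) : Prop :=
  Relation.TransGen (fun a b => a ∈ S ∧ b ∈ S ∧ ARArrow a b) x x

/-- `Γ` is a connected component of the cyclic quiver `_cΓ_R` (a cyclic component). -/
def IsCyclicComponent (Γ : Set (ARVertex R)) : Prop :=
  IsComponentOf {x | OnARCycle x} Γ

/-- A vertex represented by a cycle-finite module. -/
def IsCycleFiniteVertex (x : ARVertex R) : Prop :=
  ∃ X : IndecModA R, ARVertex.mk X = x ∧ IsCycleFiniteModule X.1

/-- A vertex represented by a directing module. -/
def IsDirectingVertex (x : ARVertex R) : Prop :=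
  ∃ X : IndecModA R, ARVertex.mk X = x ∧ IsDirectingModule X.1

/-- A cycle-finite cyclic component: a cyclic component containing a cycle-finite module. -/
def IsCycleFiniteCyclicComponent (Γ : Set (ARVertex R)) : Prop :=
  IsCyclicComponent Γ ∧ ∃ x ∈ Γ, IsCycleFiniteVertex x

/-- A full translation subquiver is cyclic if each of its vertices lies on an oriented
cycle inside it. -/
def IsCyclicSub (S : Set (ARVertex R)) : Prop := ∀ x ∈ S, OnCycleIn S x

/-- A full translation subquiver is coherent: every projective vertex is the start of an
infinite sectional path inside it, and every injective vertex is the end of an infinite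
sectional path inside it. -/
def IsCoherentSub (S : Set (ARVertex R)) : Prop :=
  (∀ x ∈ S, IsProjVertex x → ∃ c : ℕ → ARVertex R, c 0 = x ∧ (∀ n, c n ∈ S) ∧
      (∀ n, ARArrow (c n) (c (n + 1))) ∧ ∀ n, ¬TauRel (c n) (c (n + 2))) ∧
  (∀ x ∈ S, IsInjVertex x → ∃ c : ℕ → ARVertex R, c 0 = x ∧ (∀ n, c n ∈ S) ∧
      (∀ n, ARArrow (c (n + 1)) (c n)) ∧ ∀ n, ¬TauRel (c (n + 2)) (c n))

/-- `S` is a convex subquiver of (the full subquiver on) `C`: every path in `C` with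
source and target in `S` has all its vertices in `S`. -/
def ConvexIn (C S : Set (ARVertex R)) : Prop :=
  ∀ (n : ℕ) (c : ℕ → ARVertex R), (∀ k ≤ n, c k ∈ C) →
    (∀ k < n, ARArrow (c k) (c (k + 1))) → c 0 ∈ S → c n ∈ S → ∀ k ≤ n, c k ∈ S

/-- `S` is the core of the almost acyclic component `C`: the finite convex subquiver of
`C` containing all vertices lying on oriented cycles in `C`. -/
def IsCoreOf (C S : Set (ARVertex R)) : Prop :=
  S ⊆ C ∧ S.Finite ∧ ConvexIn C S ∧ ∀ x ∈ C, OnCycleIn C x → x ∈ S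

/-- A component is almost acyclic if all but finitely many of its vertices do not lie on
oriented cycles. -/
def IsAlmostAcyclicComp (C : Set (ARVertex R)) : Prop := {x ∈ C | OnCycleIn C x}.Finite

/-- A component is almost cyclic if its cyclic part is cofinite. -/
def IsAlmostCyclicComp (C : Set (ARVertex R)) : Prop := {x ∈ C | ¬OnCycleIn C x}.Finite

/-- Two vertices lie in the same `τ`-orbit. -/
def TauConn (x y : ARVertex R) : Prop :=
  Relation.ReflTransGen (fun a b => TauRel a b ∨ TauRel b a) x y

/-- The left stable part of `C`: remove the `τ`-orbits of projective vertices. -/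
def leftStable (C : Set (ARVertex R)) : Set (ARVertex R) :=
  {x | x ∈ C ∧ ¬∃ y, TauConn x y ∧ IsProjVertex y}

/-- The right stable part of `C`: remove the `τ`-orbits of injective vertices. -/
def rightStable (C : Set (ARVertex R)) : Set (ARVertex R) :=
  {x | x ∈ C ∧ ¬∃ y, TauConn x y ∧ IsInjVertex y}

/-- The stable part of `C`. -/
def stablePart (C : Set (ARVertex R)) : Set (ARVertex R) := leftStable C ∩ rightStable C

end ARQuiver

/-- The arrows of the translation quiver `ℤA∞/(τ^r)`, with vertices indexed by the
`τ`-orbit coordinate in `ZMod r` and the quasi-length (minus one) in `ℕ`. -/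
def TubeArrow {r : ℕ} : ZMod r × ℕ → ZMod r × ℕ → Prop := fun u v =>
  (v.1 = u.1 ∧ v.2 = u.2 + 1) ∨ (v.1 = u.1 + 1 ∧ u.2 = v.2 + 1)

section Tube

variable {R : Type u} [Ring R]

/-- `T` is a stable tube of rank `r`, parametrized by `φ : ℤA∞/(τ^r) → Γ_R`. -/
def IsStableTubeVia (T : Set (ARVertex R)) (r : ℕ) (φ : ZMod r × ℕ → ARVertex R) : Prop :=
  0 < r ∧ Function.Injective φ ∧ Set.range φ = T ∧
    (∀ u v, TubeArrow u v → ARArrow (φ u) (φ v)) ∧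
    (∀ u v, ARArrow (φ u) (φ v) → TubeArrow u v) ∧
    ∀ (i : ZMod r) (n : ℕ), TauRel (φ (i - 1, n)) (φ (i, n))

/-- `T` is a stable tube. -/
def IsStableTube (T : Set (ARVertex R)) : Prop := ∃ r φ, IsStableTubeVia T r φ

end Tube

section Separating

variable {R : Type u} [Ring R]

/-- A family of vertices is generalized standard if `rad^∞` vanishes between its modules. -/
def GeneralizedStandardSet (U : Set (ARVertex R)) : Prop :=
  ∀ X Y : IndecModA R, ARVertex.mk X ∈ U → ARVertex.mk Y ∈ U →
    ∀ f : X.1.M →ₗ[R] Y.1.M, InRadInf f → f = 0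

/-- `S` is (isomorphic to) a composition factor (a subquotient) of `M`. -/
def IsCompFactorMod (R : Type u) [Ring R] (S : Type u) [AddCommGroup S] [Module R S]
    (M : Type u) [AddCommGroup M] [Module R M] : Prop :=
  ∃ N' N : Submodule R M, N' ≤ N ∧
    Nonempty ((↥N ⧸ N'.comap N.subtype) ≃ₗ[R] S)

/-- A family of vertices is sincere if every simple module is a composition factor of one
of its modules. -/
def SincereSet (U : Set (ARVertex R)) : Prop :=
  ∀ (S : Type u) [AddCommGroup S] [Module R S], IsSimpleModule R S →
    ∃ x ∈ U, ∃ X : IndecModA R, ARVertex.mk X = x ∧ IsCompFactorMod R S X.1.M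

/-- All homomorphisms from modules with vertex in `U` to modules with vertex in `V` vanish. -/
def HomVanish (U V : Set (ARVertex R)) : Prop :=
  ∀ X Y : IndecModA R, ARVertex.mk X ∈ U → ARVertex.mk Y ∈ V →
    ∀ f : X.1.M →ₗ[R] Y.1.M, f = 0

/-- Every homomorphism from a module in `U` to a module in `V` factors through the
additive closure of the modules in `W`. -/
def FactorsThrough (U W V : Set (ARVertex R)) : Prop :=
  ∀ X Y : IndecModA R, ARVertex.mk X ∈ U → ARVertex.mk Y ∈ V →
    ∀ f : X.1.M →ₗ[R] Y.1.M, ∃ (k : ℕ) (Z : Fin k → IndecModA R)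
      (g : ∀ i, X.1.M →ₗ[R] (Z i).1.M) (h : ∀ i, (Z i).1.M →ₗ[R] Y.1.M),
      (∀ i, ARVertex.mk (Z i) ∈ W) ∧ f = ∑ i, (h i).comp (g i)

/-- `cs` is a separating family of components of `Γ_R`. -/
def IsSeparatingFamily (cs : Set (Set (ARVertex R))) : Prop :=
  ∃ ps qs : Set (Set (ARVertex R)),
    (∀ C ∈ ps, IsARComponent C) ∧ (∀ C ∈ cs, IsARComponent C) ∧ (∀ C ∈ qs, IsARComponent C) ∧
    (∀ C, IsARComponent C → C ∈ ps ∨ C ∈ cs ∨ C ∈ qs) ∧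
    (∀ C ∈ ps, C ∉ cs ∧ C ∉ qs) ∧ (∀ C ∈ cs, C ∉ qs) ∧
    SincereSet (⋃₀ cs) ∧ GeneralizedStandardSet (⋃₀ cs) ∧
    HomVanish (⋃₀ qs) (⋃₀ ps) ∧ HomVanish (⋃₀ qs) (⋃₀ cs) ∧ HomVanish (⋃₀ cs) (⋃₀ ps) ∧
    FactorsThrough (⋃₀ ps) (⋃₀ cs) (⋃₀ qs)

end Separating

/-! ### Classes of algebras via their Auslander-Reiten quivers.
For a ring `B`, the category `mod B` of finitely generated right `B`-modules is
realized as the category of finite length left `Bᵐᵒᵖ`-modules. -/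

/-- An algebra is of finite representation type if it has only finitely many isomorphism
classes of indecomposable finitely generated (right) modules. -/
def IsFiniteRepTypeAlg (B : Type u) [Ring B] : Prop :=
  (Set.univ : Set (ARVertex Bᵐᵒᵖ)).Finite

/-- An algebra is cycle-finite if all cycles in `ind B` are finite. -/
def IsCycleFiniteAlg (B : Type u) [Ring B] : Prop :=
  ∀ c : ModCycle Bᵐᵒᵖ, c.IsFiniteCycle

/-- A generalized multicoil algebra: an algebra whose Auslander-Reiten quiver admits a
separating family of almost cyclic coherent components. -/
def IsGeneralizedMulticoilAlgebra (B : Type u) [Ring B] : Prop :=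
  ∃ cs : Set (Set (ARVertex Bᵐᵒᵖ)),
    (∀ C ∈ cs, IsARComponent C ∧ IsAlmostCyclicComp C ∧ IsCoherentSub C) ∧
    IsSeparatingFamily cs

/-- A generalized double tilted algebra: an algebra whose Auslander-Reiten quiver admits
a separating almost acyclic component (a connecting component). -/
def IsGeneralizedDoubleTiltedAlgebra (B : Type u) [Ring B] : Prop :=
  ∃ C : Set (ARVertex Bᵐᵒᵖ),
    IsARComponent C ∧ IsAlmostAcyclicComp C ∧ IsSeparatingFamily {C}

/-- A concealed canonical algebra: an algebra whose Auslander-Reiten quiver admits a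
separating family of stable tubes. -/
def IsConcealedCanonicalAlgebra (B : Type u) [Ring B] : Prop :=
  ∃ ts : Set (Set (ARVertex Bᵐᵒᵖ)), (∀ T ∈ ts, IsStableTube T) ∧ IsSeparatingFamily ts

/-- A generic module: an indecomposable module of infinite length with finite endolength. -/
def IsGenericModule (R : Type u) [Ring R] (N : RawMod R) : Prop :=
  IsIndecMod R N.M ∧ ¬IsFiniteLength R N.M ∧ IsFiniteLength (Module.End R N.M) N.M

/-- The endolength of a module: its length over its endomorphism ring. -/
noncomputable def endolength (R : Type u) [Ring R] (N : RawMod R) : WithBot ℕ∞ :=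
  Order.krullDim (Submodule (Module.End R N.M) N.M)

/-- Generic tameness in the sense of Crawley-Boevey: for each `d` there are only finitely
many isomorphism classes of generic (right) modules of endolength `d`. -/
def IsGenericallyTameAlg (B : Type u) [Ring B] : Prop :=
  ∀ d : ℕ, ∃ (k : ℕ) (T : Fin k → RawMod Bᵐᵒᵖ),
    ∀ N : RawMod Bᵐᵒᵖ, IsGenericModule Bᵐᵒᵖ N → endolength Bᵐᵒᵖ N = (d : ℕ∞) →
      ∃ i, Nonempty (N.M ≃ₗ[Bᵐᵒᵖ] (T i).M)

/-- A tame generalized multicoil algebra. -/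
def IsTameGeneralizedMulticoilAlgebra (B : Type u) [Ring B] : Prop :=
  IsGeneralizedMulticoilAlgebra B ∧ IsGenericallyTameAlg B

/-- A tame generalized double tilted algebra. -/
def IsTameGeneralizedDoubleTiltedAlgebra (B : Type u) [Ring B] : Prop :=
  IsGeneralizedDoubleTiltedAlgebra B ∧ IsGenericallyTameAlg B

/-! ### The quiver of an algebra, convex idempotents, basic and connected algebras -/

section AlgebraSide

variable (A : Type u) [Ring A]

/-- The Jacobson radical of `A` (as a left ideal; it is in fact two-sided). -/
def jacobsonRad : Ideal A := (⊥ : Ideal A).jacobson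

/-- The square of the Jacobson radical of `A`. -/
def jacobsonRadSq : Ideal A :=
  Ideal.span {x | ∃ a ∈ jacobsonRad A, ∃ b ∈ jacobsonRad A, x = a * b}

/-- A primitive idempotent of `A`. -/
def IsPrimitiveIdempotent (e : A) : Prop :=
  IsIdempotentElem e ∧ e ≠ 0 ∧
    ∀ f g : A, IsIdempotentElem f → IsIdempotentElem g → f * g = 0 → g * f = 0 →
      e = f + g → f = 0 ∨ g = 0

/-- A complete family of pairwise orthogonal primitive idempotents of `A`; its indices
are the vertices of the quiver `Q_A` of `A`. -/
structure CompleteIdemFamily (A : Type u) [Ring A] where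
  n : ℕ
  e : Fin n → A
  prim : ∀ i, IsPrimitiveIdempotent A (e i)
  orth : ∀ i j, i ≠ j → e i * e j = 0
  total : ∑ i, e i = 1

/-- There is an arrow `i → j` in the quiver `Q_A` iff `e_i (rad A) e_j ⊄ (rad A)²`. -/
def QAarrow (E : CompleteIdemFamily A) (i j : Fin E.n) : Prop :=
  ∃ y ∈ jacobsonRad A, E.e i * y * E.e j ∉ jacobsonRadSq A

/-- A set of vertices of `Q_A` is convex if every path of `Q_A` with source and target in
it has all its vertices in it. -/
def ConvexVertexSet (E : CompleteIdemFamily A) (S : Set (Fin E.n)) : Prop :=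
  ∀ (n : ℕ) (c : ℕ → Fin E.n), (∀ k < n, QAarrow A E (c k) (c (k + 1))) →
    c 0 ∈ S → c n ∈ S → ∀ k ≤ n, c k ∈ S

/-- A convex idempotent of `A`: a sum of pairwise orthogonal primitive idempotents
corresponding to the vertices of a convex subquiver of `Q_A`. -/
def IsConvexIdempotent (e : A) : Prop :=
  ∃ (E : CompleteIdemFamily A) (S : Finset (Fin E.n)),
    ConvexVertexSet A E ↑S ∧ e = ∑ i ∈ S, E.e i

/-- The corner `eAe` of `A` at an idempotent `e`, as a nonunital subring (it is a unital
ring with unit `e`). -/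
def cornerRing (e : A) : NonUnitalSubring A where
  carrier := {x | e * x = x ∧ x * e = x}
  zero_mem' := by simp
  add_mem' := by
    rintro a b ⟨ha1, ha2⟩ ⟨hb1, hb2⟩
    constructor
    · rw [mul_add, ha1, hb1]
    · rw [add_mul, ha2, hb2]
  neg_mem' := by
    rintro a ⟨ha1, ha2⟩
    constructor
    · rw [mul_neg, ha1]
    · rw [neg_mul, ha2]
  mul_mem' := by
    rintro a b ⟨ha1, ha2⟩ ⟨hb1, hb2⟩
    constructor
    · rw [← mul_assoc, ha1]
    · rw [mul_assoc, hb2]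

/-- An (indecomposable =) connected algebra: no nontrivial central idempotents. -/
def IsConnectedAlgebra : Prop :=
  Nontrivial A ∧ ∀ e : A, IsIdempotentElem e → e ∈ Set.center A → e = 0 ∨ e = 1

/-- A basic algebra: distinct orthogonal primitive idempotents have nonisomorphic
associated indecomposable projective right modules. -/
def IsBasicAlgebra : Prop :=
  ¬∃ e f : A, IsPrimitiveIdempotent A e ∧ IsPrimitiveIdempotent A f ∧
    e * f = 0 ∧ f * e = 0 ∧
    Nonempty ((Submodule.span Aᵐᵒᵖ {e} : Submodule Aᵐᵒᵖ A) ≃ₗ[Aᵐᵒᵖ]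
      (Submodule.span Aᵐᵒᵖ {f} : Submodule Aᵐᵒᵖ A))

end AlgebraSide

/-! ### Support algebras and faithful algebras of families of vertices -/

section Support

variable (A : Type u) [Ring A]

/-- The radical of a module: the intersection of its maximal submodules. -/
def modRadical (R : Type u) [Ring R] (M : Type u) [AddCommGroup M] [Module R M] :
    Submodule R M :=
  sInf {N | IsCoatom N}

/-- The intersection `ann_A(Γ)` of the annihilators of all right `A`-modules whose
vertices belong to `Γ`, as a two-sided ideal of `A`. -/
def annTwoSidedIdeal (Γ : Set (ARVertex Aᵐᵒᵖ)) : TwoSidedIdeal A :=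
  TwoSidedIdeal.mk'
    {a | ∀ x ∈ Γ, ∀ X : IndecModA Aᵐᵒᵖ, ARVertex.mk X = x →
      ∀ m : X.1.M, MulOpposite.op a • m = 0}
    (by intro x _ X _ m; simp)
    (by
      intro a b ha hb x hx X hX m
      have : MulOpposite.op (a + b) • m = MulOpposite.op a • m + MulOpposite.op b • m := by
        rw [← add_smul]; rfl
      rw [this, ha x hx X hX m, hb x hx X hX m, add_zero])
    (by
      intro a ha x hx X hX m
      have : MulOpposite.op (-a) • m = -(MulOpposite.op a • m) := by
        rw [← neg_smul]; rfl
      rw [this, ha x hx X hX m, neg_zero])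
    (by
      intro a b hb x hx X hX m
      have : MulOpposite.op (a * b) • m = MulOpposite.op b • (MulOpposite.op a • m) := by
        rw [← mul_smul]; rfl
      rw [this, hb x hx X hX _])
    (by
      intro a b ha x hx X hX m
      have : MulOpposite.op (a * b) • m = MulOpposite.op b • (MulOpposite.op a • m) := by
        rw [← mul_smul]; rfl
      rw [this, ha x hx X hX m, smul_zero])

/-- The faithful algebra `B(Γ) = A / ann_A(Γ)` of a family `Γ` of vertices of `Γ_A`. -/
abbrev faithfulAlg (Γ : Set (ARVertex Aᵐᵒᵖ)) : Type u :=
  (annTwoSidedIdeal A Γ).ringCon.Quotient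

/-- The canonical projection `A → B(Γ)`. -/
def faithfulProj (Γ : Set (ARVertex Aᵐᵒᵖ)) : A →+* faithfulAlg A Γ :=
  RingCon.mk' (annTwoSidedIdeal A Γ).ringCon

/-- The trace ideal `t_A(Γ)`: the two-sided ideal of `A` generated by the images of all
homomorphisms of right `A`-modules from `Q` to `A`. -/
def traceIdeal (Q : Submodule Aᵐᵒᵖ A) : TwoSidedIdeal A :=
  TwoSidedIdeal.span (⋃ f : ↥Q →ₗ[Aᵐᵒᵖ] A, Set.range f)

/-- A decomposition `A = P_Γ ⊕ Q_Γ` of `A` in `mod A` such that the simple summands of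
`P_Γ / rad P_Γ` are exactly the simple composition factors of the modules in `Γ`. -/
structure GammaDecomp (A : Type u) [Ring A] (Γ : Set (ARVertex Aᵐᵒᵖ)) where
  P : Submodule Aᵐᵒᵖ A
  Q : Submodule Aᵐᵒᵖ A
  compl : IsCompl P Q
  top_factors : ∀ (S : Type u) [AddCommGroup S] [Module Aᵐᵒᵖ S], IsSimpleModule Aᵐᵒᵖ S →
    (IsCompFactorMod Aᵐᵒᵖ S (↥P ⧸ modRadical Aᵐᵒᵖ ↥P) ↔
      ∃ x ∈ Γ, ∃ X : IndecModA Aᵐᵒᵖ, ARVertex.mk X = x ∧ IsCompFactorMod Aᵐᵒᵖ S X.1.M)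

end Support

/-- Restriction of scalars along a surjective ring homomorphism `π : A → B` identifies a
vertex `y` of `Γ_B` with a vertex `x` of `Γ_A`: representatives have the same underlying
group, with the `A`-action obtained from the `B`-action through `π`. -/
def VertexRestrictsTo {A B : Type u} [Ring A] [Ring B] (π : A →+* B)
    (y : ARVertex Bᵐᵒᵖ) (x : ARVertex Aᵐᵒᵖ) : Prop :=
  ∃ (N : IndecModA Bᵐᵒᵖ) (X : IndecModA Aᵐᵒᵖ), ARVertex.mk N = y ∧ ARVertex.mk X = x ∧
    ∃ e : X.1.M ≃+ N.1.M, ∀ (a : A) (m : X.1.M),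
      e (MulOpposite.op a • m) = MulOpposite.op (π a) • e m

/-! ### `K`-module structures on Hom-groups, lengths, and Ext -/

section KLength

variable (K B : Type u) [CommRing K] [Ring B] [Algebra K B]
variable (X N : Type u) [AddCommGroup X] [Module B X] [AddCommGroup N] [Module B N]

/-- The action of `K` on `B`-linear maps, through `algebraMap K B`. -/
def homKSMul (k : K) (f : X →ₗ[B] N) : X →ₗ[B] N where
  toFun x := algebraMap K B k • f x
  map_add' x y := by show algebraMap K B k • f (x + y) = _; rw [map_add, smul_add]
  map_smul' b x := by
    simp only [map_smul, RingHom.id_apply, smul_smul]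
    rw [Algebra.commutes]

/-- The `K`-module structure on the group of `B`-linear maps. -/
def homKModule : Module K (X →ₗ[B] N) where
  smul := homKSMul K B X N
  one_smul f := LinearMap.ext fun x => by
    show algebraMap K B 1 • f x = f x
    rw [map_one, one_smul]
  mul_smul k l f := LinearMap.ext fun x => by
    show algebraMap K B (k * l) • f x = algebraMap K B k • algebraMap K B l • f x
    rw [map_mul, mul_smul]
  smul_zero k := LinearMap.ext fun x => by
    show algebraMap K B k • (0 : X →ₗ[B] N) x = 0
    simp
  smul_add k f g := LinearMap.ext fun x => by
    show algebraMap K B k • (f + g) x = algebraMap K B k • f x + algebraMap K B k • g x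
    simp [smul_add]
  add_smul k l f := LinearMap.ext fun x => by
    show algebraMap K B (k + l) • f x = algebraMap K B k • f x + algebraMap K B l • f x
    rw [map_add, add_smul]
  zero_smul f := LinearMap.ext fun x => by
    show algebraMap K B 0 • f x = 0
    rw [map_zero, zero_smul]

/-- The length `|Hom_B(X, N)|` of the group of `B`-linear maps `X → N` as a `K`-module. -/
noncomputable def homKLength : WithBot ℕ∞ :=
  letI : Module K (X →ₗ[B] N) := homKModule K B X N
  Order.krullDim (Submodule K (X →ₗ[B] N))

/-- The canonical surjection from the free module on (the underlying set of) `X` to `X`. -/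
noncomputable def freeCover : (X →₀ B) →ₗ[B] X :=
  Finsupp.linearCombination B id

/-- The length `|Ext¹_B(X, N)|` of `Ext¹` as a `K`-module, computed as the cokernel of
`Hom_B(F, N) → Hom_B(Ω X, N)` for the canonical free cover `F → X` with kernel `Ω X`. -/
noncomputable def ext1KLength : WithBot ℕ∞ :=
  letI : Module K (↥(LinearMap.ker (freeCover B X)) →ₗ[B] N) :=
    homKModule K B (↥(LinearMap.ker (freeCover B X))) N
  let D : Submodule K (↥(LinearMap.ker (freeCover B X)) →ₗ[B] N) :=
    { carrier := {f | ∃ g : (X →₀ B) →ₗ[B] N,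
        f = g.comp (LinearMap.ker (freeCover B X)).subtype}
      add_mem' := by
        rintro f₁ f₂ ⟨g₁, rfl⟩ ⟨g₂, rfl⟩
        exact ⟨g₁ + g₂, rfl⟩
      zero_mem' := ⟨0, rfl⟩
      smul_mem' := by
        rintro k f ⟨g, rfl⟩
        exact ⟨homKSMul K B _ N k g, rfl⟩ }
  Order.krullDim (Submodule K ((↥(LinearMap.ker (freeCover B X)) →ₗ[B] N) ⧸ D))

end KLength

/-- Vanishing of `Ext¹_B(X, N)`: every short exact sequence `0 → N → E → X → 0` splits. -/
def Ext1IsZero (B : Type u) [Ring B] (X : Type u) [AddCommGroup X] [Module B X]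
    (N : Type u) [AddCommGroup N] [Module B N] : Prop :=
  ∀ (E : Type u) [AddCommGroup E] [Module B E], ∀ (f : N →ₗ[B] E) (g : E →ₗ[B] X),
    Function.Injective f → Function.Surjective g → LinearMap.range f = LinearMap.ker g →
    ∃ s : X →ₗ[B] E, g.comp s = LinearMap.id

/-- The syzygy `Ω X`: the kernel of the canonical free cover of `X`. -/
noncomputable def syzygyRaw (B : Type u) [Ring B] (X : RawMod B) : RawMod B :=
  ⟨↥(LinearMap.ker (freeCover B X.M))⟩

/-- Iterated syzygies. -/
noncomputable def syzygyIter (B : Type u) [Ring B] : ℕ → RawMod B → RawMod B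
  | 0, X => X
  | n + 1, X => syzygyRaw B (syzygyIter B n X)

/-- Vanishing of `Ext^r_B(X, N)` for `r ≥ 1`, via `Ext^r(X, N) ≅ Ext¹(Ω^{r-1} X, N)`. -/
noncomputable def ExtIsZero (B : Type u) [Ring B] (X N : RawMod B) (r : ℕ) : Prop :=
  Ext1IsZero B (syzygyIter B (r - 1) X).M N.M

/-- `[X] = [M]` in the Grothendieck group `K₀`: the modules `X` and `M` have the same
composition factors including multiplicities. -/
def SameCompFactors {B : Type u} [Ring B] (X M : ModA B) : Prop :=
  ∃ (n : ℕ) (s : Fin (n + 1) → Submodule B X.M) (t : Fin (n + 1) → Submodule B M.M)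
    (σ : Equiv.Perm (Fin n)),
    s 0 = ⊥ ∧ s (Fin.last n) = ⊤ ∧ t 0 = ⊥ ∧ t (Fin.last n) = ⊤ ∧
    (∀ i : Fin n, s i.castSucc ≤ s i.succ) ∧ (∀ i : Fin n, t i.castSucc ≤ t i.succ) ∧
    ∀ i : Fin n,
      IsSimpleModule B (↥(s i.succ) ⧸ (s i.castSucc).comap (s i.succ).subtype) ∧
      Nonempty ((↥(s i.succ) ⧸ (s i.castSucc).comap (s i.succ).subtype) ≃ₗ[B]
        (↥(t (σ i).succ) ⧸ (t (σ i).castSucc).comap (t (σ i).succ).subtype))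

/-- A torsion class in `mod B`: a class of modules closed under factor modules and
extensions. -/
def IsTorsionClass (B : Type u) [Ring B] (T : Set (ModA B)) : Prop :=
  (∀ M ∈ T, ∀ (N : ModA B) (g : M.M →ₗ[B] N.M), Function.Surjective g → N ∈ T) ∧
  ∀ (X E M : ModA B) (f : X.M →ₗ[B] E.M) (g : E.M →ₗ[B] M.M),
    Function.Injective f → Function.Surjective g → LinearMap.range f = LinearMap.ker g →
    X ∈ T → M ∈ T → E ∈ T

/-- A torsion class is functorially finite iff it is of the form `Fac(M)`. -/
def IsFunctoriallyFinite (B : Type u) [Ring B] (T : Set (ModA B)) : Prop :=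
  ∃ M : ModA B,
    T = {N | ∃ (k : ℕ) (g : (Fin k → M.M) →ₗ[B] N.M), Function.Surjective g}

/-- A module `M` is `τ`-rigid if `Hom(M, τM) = 0`. -/
def IsTauRigid {B : Type u} [Ring B] (M : ModA B) : Prop :=
  ∀ N : ModA B, IsTauOf N M → ∀ f : M.M →ₗ[B] N.M, f = 0

/-- A module `M` is rigid if `Ext¹(M, M) = 0`. -/
def IsRigid {B : Type u} [Ring B] (M : ModA B) : Prop := Ext1IsZero B M.M M.M

/-- `α(M) ≤ 2`: the middle term of any almost split sequence ending at `M` has at most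
two indecomposable direct summands. -/
def AlphaLe2 {B : Type u} [Ring B] (M : ModA B) : Prop :=
  ∀ s : AlmostSplitSeq B, s.r.Iso M →
    ∀ (k : ℕ) (N : Fin k → Submodule B s.m.M),
      (∀ i, IsIndecMod B ↥(N i)) → iSupIndep N → (⨆ i, N i) = ⊤ → k ≤ 2

/-!
We show that every composite `P_Γ → Q_Γ → P_Γ` vanishes. Then sending `a` to the compression to
`P_Γ` of left multiplication by `a` is a surjective ring homomorphism `A → End_A(P_Γ)`, and its
kernel is `t_A(Γ)`.

Suppose that `P_Γ → Q_Γ → P_Γ` is nonzero, and let `X` be the image of `Q_Γ → P_Γ`. A simple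
quotient of the image of `P_Γ` in `X` is a composition factor of some `N` in `Γ`, and amalgamating
`N` and `X` over it gives a path of nonzero homomorphisms from `N` to a simple quotient `Z` of `X`.
On the other hand `Z` embeds into a quotient of `P_Γ`, each indecomposable summand of which maps
nontrivially to a module in `Γ`. Since `Γ` is convex under paths of nonzero homomorphisms, `Z` lies
in `Γ`; but `Hom(Q_Γ, Z) ≠ 0`, whereas `Hom(Q_Γ, Γ) = 0` because `A` is basic.

Convexity of `Γ` follows from cycle-finiteness once any two modules in `Γ` are joined by a path of
nonzero homomorphisms. As `Γ` is only connected as an unoriented graph, this requires reversing an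
irreducible morphism between two modules on oriented cycles by such a path, which is done by means
of the split torsion pair that a missing path would define.
-/

namespace SupportAlgebra

open CategoryTheory CategoryTheory.Limits

universe v w

/-! ### Split torsion pairs and pushouts along irreducible morphisms -/

section SplitTorsionPairs

variable {C : Type w} [Category.{v} C]

/-- Irreducible morphisms of Auslander and Reiten. -/
structure IsIrreducibleHom {X Y : C} (f : X ⟶ Y) : Prop where
  not_isSplitMono : ¬ IsSplitMono f
  not_isSplitEpi : ¬ IsSplitEpi f
  isSplitMono_or_isSplitEpi : ∀ ⦃Z : C⦄ (g : X ⟶ Z) (h : Z ⟶ Y), g ≫ h = f →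
    IsSplitMono g ∨ IsSplitEpi h

lemma IsIrreducibleHom.op {X Y : C} {f : X ⟶ Y} (hf : IsIrreducibleHom f) :
    IsIrreducibleHom f.op where
  not_isSplitMono h := hf.not_isSplitEpi <| .mk' ⟨(retraction f.op).unop,
    Quiver.Hom.op_inj (IsSplitMono.id f.op)⟩
  not_isSplitEpi h := hf.not_isSplitMono <| .mk' ⟨(section_ f.op).unop,
    Quiver.Hom.op_inj (IsSplitEpi.id f.op)⟩
  isSplitMono_or_isSplitEpi Z g h hgh := by
    obtain _ | _ := hf.isSplitMono_or_isSplitEpi h.unop g.unop (Quiver.Hom.op_inj hgh)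
    · exact .inr (inferInstanceAs (IsSplitEpi h.unop.op))
    · exact .inl (inferInstanceAs (IsSplitMono g.unop.op))

lemma op_pow {X : C} (f : End X) (n : ℕ) :
    (f ^ n).op = (show End (Opposite.op X) from f.op) ^ n := by
  induction n with
  | zero => rfl
  | succ n ih => rw [pow_succ, pow_succ', End.mul_def, op_comp, ih, End.mul_def]

variable [Abelian C]

/-- A torsion pair `(T, F)` all of whose torsion sequences split: the splitting of `G` is recorded
by the projection `e` of `G` onto its torsion part, which makes the notion visibly self-dual. -/
structure IsSplitTorsionPair (T F : ObjectProperty C) : Prop where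
  torsion_iff : ∀ W, T W ↔ ∀ Z, F Z → ∀ f : W ⟶ Z, f = 0
  free_iff : ∀ Z, F Z ↔ ∀ W, T W → ∀ f : W ⟶ Z, f = 0
  exists_projection : ∀ G, ∃ e : G ⟶ G,
    (∀ W, T W → ∀ φ : W ⟶ G, φ ≫ e = φ) ∧ ∀ Z, F Z → ∀ ψ : G ⟶ Z, e ≫ ψ = 0

/-- `U` is injective relative to the monomorphisms whose cokernel satisfies `F`. -/
def IsRelInjective (F : ObjectProperty C) (U : C) : Prop :=
  ∀ ⦃K M : C⦄ (a : K ⟶ M) [Mono a], F (cokernel a) → ∀ u : K ⟶ U, ∃ v : M ⟶ U, a ≫ v = u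

variable {T F : ObjectProperty C}

lemma mono_biprod_lift_neg {U Z W : C} (g : U ⟶ Z) (ι : U ⟶ W) [Mono ι] :
    Mono (biprod.lift g (-ι)) := by
  refine Preadditive.mono_of_cancel_zero _ fun k hk ↦ zero_of_comp_mono ι ?_
  rw [← neg_eq_zero, ← Preadditive.comp_neg, ← biprod.lift_snd g (-ι), ← Category.assoc, hk,
    zero_comp]

lemma exists_comp_biprod_lift_eq {U Z W W' A : C} {g : U ⟶ Z} {ι : U ⟶ W} {ι' : Z ⟶ W'}
    {g' : W ⟶ W'} (sq : IsPushout g ι ι' g') [Mono ι] (t : A ⟶ Z ⊞ W)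
    (ht : t ≫ biprod.desc ι' g' = 0) : ∃ δ : A ⟶ U, δ ≫ biprod.lift g (-ι) = t :=
  have : Mono sq.shortComplex.f := mono_biprod_lift_neg g ι
  ⟨sq.exact_shortComplex.lift t ht, sq.exact_shortComplex.lift_f t ht⟩

namespace IsSplitTorsionPair

lemma hom_eq_zero (h : IsSplitTorsionPair T F) {W Z : C} (hW : T W) (hZ : F Z) (f : W ⟶ Z) :
    f = 0 :=
  (h.torsion_iff W).1 hW Z hZ f

lemma free_of_mono (h : IsSplitTorsionPair T F) {X Y : C} (f : X ⟶ Y) [Mono f] (hY : F Y) :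
    F X :=
  (h.free_iff X).2 fun _ hW g ↦ zero_of_comp_mono f (h.hom_eq_zero hW hY (g ≫ f))

lemma free_cokernel_kernel_ι (h : IsSplitTorsionPair T F) {X Y : C} (f : X ⟶ Y) (hY : F Y) :
    F (cokernel (kernel.ι f)) :=
  h.free_of_mono (Abelian.factorThruCoimage f) hY

lemma free_of_free_cokernel (h : IsSplitTorsionPair T F) {X Y : C} (a : X ⟶ Y) [Mono a]
    (hX : F X) (ha : F (cokernel a)) : F Y := by
  refine (h.free_iff Y).2 fun W hW g ↦ ?_
  rw [← Abelian.monoLift_comp a g (h.hom_eq_zero hW ha _),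
    h.hom_eq_zero hW hX (Abelian.monoLift a g _), zero_comp]

lemma isRelInjective_of_forall_isSplitMono (h : IsSplitTorsionPair T F) {U : C}
    (hU : ∀ ⦃M : C⦄ (a : U ⟶ M) [Mono a], F (cokernel a) → IsSplitMono a) :
    IsRelInjective F U := by
  intro K M a _ ha u
  have sq : IsPushout a u (pushout.inl a u) (pushout.inr a u) := .of_hasPushout a u
  have := isIso_cokernel_map_of_isPushout sq
  have := hU (pushout.inr a u) (h.free_of_mono (inv (cokernel.map _ _ _ _ sq.w)) ha)
  exact ⟨pushout.inl a u ≫ retraction (pushout.inr a u), by simp [sq.w_assoc]⟩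

lemma isRelInjective_of_torsion (h : IsSplitTorsionPair T F) {Y : C} (hY : T Y) :
    IsRelInjective F Y := by
  refine h.isRelInjective_of_forall_isSplitMono fun M a _ ha ↦ ?_
  obtain ⟨e, he, he'⟩ := h.exists_projection M
  exact .mk' ⟨Abelian.monoLift a e (he' _ ha _), by
    rw [← cancel_mono a, Category.assoc, Abelian.monoLift_comp, he Y hY, Category.id_comp]⟩

lemma isRelInjective_of_isIrreducibleHom (h : IsSplitTorsionPair T F) {X Y : C} {f : X ⟶ Y}
    (hf : IsIrreducibleHom f) (hY : T Y) : IsRelInjective F X := by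
  refine h.isRelInjective_of_forall_isSplitMono fun M a _ ha ↦ ?_
  obtain ⟨b, hb⟩ := h.isRelInjective_of_torsion hY a ha f
  refine (hf.isSplitMono_or_isSplitEpi a b hb).resolve_right fun _ ↦ hf.not_isSplitEpi ?_
  exact .mk' ⟨Abelian.monoLift a (section_ b) (h.hom_eq_zero hY ha _), by
    rw [← hb, ← Category.assoc, Abelian.monoLift_comp, IsSplitEpi.id]⟩

lemma exists_lift_of_isRelInjective (h : IsSplitTorsionPair T F) {U B B' : C} {i : U ⟶ B}
    {q : B ⟶ B'} [Epi q] (hiq : i ≫ q = 0)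
    (hlift : ∀ ⦃A : C⦄ (t : A ⟶ B), t ≫ q = 0 → ∃ δ : A ⟶ U, δ ≫ i = t)
    (hU : IsRelInjective F U) {E : C} (hE : F E) (φ : E ⟶ B') : ∃ ψ : E ⟶ B, ψ ≫ q = φ := by
  let p := pullback.fst φ q
  obtain ⟨δ, hδ⟩ := hlift (kernel.ι p ≫ pullback.snd φ q) <| by
    rw [Category.assoc, ← pullback.condition, kernel.condition_assoc, zero_comp]
  obtain ⟨v, hv⟩ := hU (kernel.ι p) (h.free_cokernel_kernel_ι p hE) δ
  have hdesc : kernel.ι p ≫ (pullback.snd φ q - v ≫ i) = 0 := by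
    rw [Preadditive.comp_sub, ← Category.assoc _ v, hv, hδ, sub_self]
  refine ⟨Abelian.epiDesc p _ hdesc, ?_⟩
  rw [← cancel_epi p, ← Category.assoc, Abelian.comp_epiDesc, Preadditive.sub_comp, Category.assoc,
    hiq, comp_zero, sub_zero, ← pullback.condition]

lemma torsion_of_isPushout (h : IsSplitTorsionPair T F) {U Z W W' : C} {g : U ⟶ Z} {ι : U ⟶ W}
    {ι' : Z ⟶ W'} {g' : W ⟶ W'} (sq : IsPushout g ι ι' g') (hU : IsRelInjective F U)
    (hg : IsIrreducibleHom g) (hW : T W) : T W' := by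
  refine (h.torsion_iff W').2 fun V hV ψ ↦ ?_
  have hψ : g' ≫ ψ = 0 := h.hom_eq_zero hW hV _
  suffices hk : ι' ≫ ψ = 0 from sq.hom_ext (by rw [hk, comp_zero]) (by rw [hψ, comp_zero])
  have hg0 : g ≫ ι' ≫ ψ = 0 := by rw [← Category.assoc, sq.w, Category.assoc, hψ, comp_zero]
  obtain _ | _ := hg.isSplitMono_or_isSplitEpi _ _ (kernel.lift_ι (ι' ≫ ψ) g hg0)
  · obtain ⟨r, hr⟩ := hU (kernel.ι (ι' ≫ ψ)) (h.free_cokernel_kernel_ι _ hV)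
      (retraction (kernel.lift (ι' ≫ ψ) g hg0))
    refine absurd (.mk' ⟨r, ?_⟩) hg.not_isSplitMono
    rw [← kernel.lift_ι (ι' ≫ ψ) g hg0, Category.assoc, hr, IsSplitMono.id]
  · rw [← cancel_epi (kernel.ι (ι' ≫ ψ)), kernel.condition, comp_zero]

lemma exists_eq_add_of_isPushout (h : IsSplitTorsionPair T F) {U Z W W' : C} {g : U ⟶ Z}
    {ι : U ⟶ W} {ι' : Z ⟶ W'} {g' : W ⟶ W'} (sq : IsPushout g ι ι' g') [Mono ι]
    (hU : IsRelInjective F U) {E : C} (hE : F E) (φ : E ⟶ W') :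
    ∃ (α : E ⟶ Z) (β : E ⟶ W), φ = α ≫ ι' + β ≫ g' := by
  have : Epi (biprod.desc ι' g') := sq.epi_shortComplex_g
  obtain ⟨ψ, rfl⟩ := h.exists_lift_of_isRelInjective (i := biprod.lift g (-ι))
    (q := biprod.desc ι' g') sq.shortComplex.zero (fun _ ↦ exists_comp_biprod_lift_eq sq) hU hE φ
  exact ⟨ψ ≫ biprod.fst, ψ ≫ biprod.snd, by simp [biprod.desc_eq]⟩

lemma isRelInjective_of_isPushout (h : IsSplitTorsionPair T F) {U Z W W' : C} {g : U ⟶ Z}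
    {ι : U ⟶ W} {ι' : Z ⟶ W'} {g' : W ⟶ W'} (sq : IsPushout g ι ι' g') [Mono ι]
    (hU : IsRelInjective F U) (hW' : T W') (hZ : F Z) (hg : ∀ δ : Z ⟶ U, IsIso (𝟙 Z + δ ≫ g)) :
    IsRelInjective F Z := by
  refine h.isRelInjective_of_forall_isSplitMono fun E a _ ha ↦ ?_
  obtain ⟨φ, hφ⟩ := h.isRelInjective_of_torsion hW' a ha ι'
  obtain ⟨α, β, rfl⟩ := h.exists_eq_add_of_isPushout sq hU (h.free_of_free_cokernel a hZ ha) φ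
  have hzero : biprod.lift (a ≫ α - 𝟙 Z) (a ≫ β) ≫ biprod.desc ι' g' = 0 := by
    rw [biprod.lift_desc, Preadditive.sub_comp, Category.assoc, Category.assoc, sub_add_eq_add_sub,
      ← Preadditive.comp_add, hφ, Category.id_comp, sub_self]
  obtain ⟨δ, hδ⟩ := exists_comp_biprod_lift_eq sq _ hzero
  have hδg : δ ≫ g = a ≫ α - 𝟙 Z := by simpa using hδ =≫ biprod.fst
  have : IsIso (a ≫ α) := by
    rw [← add_sub_cancel (𝟙 Z) (a ≫ α), ← hδg]
    exact hg δ
  exact .mk' ⟨α ≫ inv (a ≫ α), by rw [← Category.assoc, IsIso.hom_inv_id]⟩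

end IsSplitTorsionPair

/-- Admissible embeddings, of a relatively injective torsion-free object into a torsion object: the
invariant that is preserved by pushouts along irreducible morphisms. -/
structure IsAdmissible (T F : ObjectProperty C) {U W : C} (ι : U ⟶ W) : Prop where
  mono : Mono ι
  torsion : T W
  free : F U
  isRelInjective : IsRelInjective F U

/-- Pushouts along `c` preserve admissible embeddings. -/
def PreservesAdmissible (T F : ObjectProperty C) {U Z : C} (c : U ⟶ Z) : Prop :=
  ∀ ⦃W : C⦄ (ι : U ⟶ W), IsAdmissible T F ι →
    ∃ (W' : C) (ι' : Z ⟶ W') (c' : W ⟶ W'), IsPushout c ι ι' c' ∧ IsAdmissible T F ι'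

lemma IsAdmissible.of_isIrreducibleHom (h : IsSplitTorsionPair T F) {X Y : C} {f : X ⟶ Y} [Mono f]
    (hf : IsIrreducibleHom f) (hX : F X) (hY : T Y) : IsAdmissible T F f :=
  ⟨inferInstance, hY, hX, h.isRelInjective_of_isIrreducibleHom hf hY⟩

namespace PreservesAdmissible

lemma of_isIrreducibleHom (h : IsSplitTorsionPair T F) {U Z : C} {g : U ⟶ Z}
    (hg : IsIrreducibleHom g) (hloc : ∀ δ : Z ⟶ U, IsIso (𝟙 Z + δ ≫ g)) (hZ : F Z) :
    PreservesAdmissible T F g := by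
  intro W ι hι
  have := hι.mono
  have sq : IsPushout g ι (pushout.inl g ι) (pushout.inr g ι) := .of_hasPushout g ι
  have hW' := h.torsion_of_isPushout sq hι.isRelInjective hg hι.torsion
  exact ⟨_, _, _, sq, inferInstance, hW', hZ,
    h.isRelInjective_of_isPushout sq hι.isRelInjective hW' hZ hloc⟩

lemma comp {U V Z : C} {c : U ⟶ V} {d : V ⟶ Z} (hc : PreservesAdmissible T F c)
    (hd : PreservesAdmissible T F d) : PreservesAdmissible T F (c ≫ d) := by
  intro W ι hι
  obtain ⟨W₁, ι₁, c', sq₁, h₁⟩ := hc ι hι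
  obtain ⟨W₂, ι₂, d', sq₂, h₂⟩ := hd ι₁ h₁
  exact ⟨W₂, ι₂, c' ≫ d', sq₁.flip.paste_vert sq₂.flip |>.flip, h₂⟩

lemma pow {U : C} {c : End U} (hc : PreservesAdmissible T F c) :
    ∀ n : ℕ, PreservesAdmissible T F (c ^ n)
  | 0 => fun W ι hι ↦ ⟨W, ι, 𝟙 W, IsPushout.id_horiz ι, hι⟩
  | n + 1 => hc.comp (hc.pow n)

lemma isZero_of_zero (h : IsSplitTorsionPair T F) {U W : C} {ι : U ⟶ W} (hι : IsAdmissible T F ι)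
    (h0 : PreservesAdmissible T F (0 : U ⟶ U)) : IsZero U := by
  obtain ⟨W', ι', c', sq, h'⟩ := h0 ι hι
  have hdesc : ι' ≫ sq.desc (𝟙 U) 0 (by simp) = 𝟙 U := sq.inl_desc _ _ _
  rw [h.hom_eq_zero h'.torsion hι.free (sq.desc _ _ _), comp_zero] at hdesc
  exact (IsZero.iff_id_eq_zero U).2 hdesc.symm

end PreservesAdmissible
end SplitTorsionPairs

section KrullSchmidt

variable {C : Type w} [Category.{v} C] [Abelian C]

/-- A nonzero object satisfying the conclusion of Fitting's lemma: its endomorphisms are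
invertible or nilpotent. -/
def IsFittingObject (X : C) : Prop :=
  ¬ IsZero X ∧ ∀ f : End X, IsIso f ∨ IsNilpotent f

/-- Every object is a finite direct sum of objects with Fitting's property; the summands are
recorded by their projections and inclusions. -/
def IsKrullSchmidt (C : Type w) [Category.{v} C] [Abelian C] : Prop :=
  ∀ G : C, ∃ (J : Type) (_ : Fintype J) (V : J → C) (p : ∀ j, G ⟶ V j) (i : ∀ j, V j ⟶ G),
    (∀ j, IsFittingObject (V j)) ∧ ∑ j, p j ≫ i j = 𝟙 G

/-- A nonzero morphism between objects with Fitting's property. -/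
def FittingStep (X Y : C) : Prop :=
  IsFittingObject X ∧ IsFittingObject Y ∧ ∃ f : X ⟶ Y, f ≠ 0

/-- An irreducible morphism between objects with Fitting's property. -/
def IrreducibleStep (X Y : C) : Prop :=
  IsFittingObject X ∧ IsFittingObject Y ∧ ∃ f : X ⟶ Y, IsIrreducibleHom f

lemma IsIrreducibleHom.isIso_id_add {X Y : C} {g : X ⟶ Y} (hg : IsIrreducibleHom g)
    (hY : IsFittingObject Y) (δ : Y ⟶ X) : IsIso (𝟙 Y + δ ≫ g) := by
  obtain hiso | hnil := hY.2 (δ ≫ g)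
  · exact absurd (.mk' ⟨inv (δ ≫ g) ≫ δ, by simp⟩) hg.not_isSplitEpi
  · exact (isUnit_iff_isIso _).1 hnil.isUnit_one_add

lemma IsIrreducibleHom.ne_zero {X Y : C} {f : X ⟶ Y} (hf : IsIrreducibleHom f)
    (hX : ¬ IsZero X) (hY : ¬ IsZero Y) : f ≠ 0 := by
  rintro rfl
  obtain _ | _ := hf.isSplitMono_or_isSplitEpi (0 : X ⟶ ⊥_ C) 0 comp_zero
  · exact hX (.of_mono_zero X (⊥_ C))
  · exact hY (.of_epi_zero (⊥_ C) Y)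

lemma IrreducibleStep.fittingStep {X Y : C} (h : IrreducibleStep X Y) : FittingStep X Y :=
  let ⟨hX, hY, f, hf⟩ := h
  ⟨hX, hY, f, hf.ne_zero hX.1 hY.1⟩

lemma IsKrullSchmidt.hom_eq_zero (hC : IsKrullSchmidt C) {P : ObjectProperty C} {W Z : C}
    (hW : ∀ V, IsFittingObject V → P V → ∀ f : W ⟶ V, f = 0)
    (hZ : ∀ V, IsFittingObject V → ¬ P V → ∀ f : V ⟶ Z, f = 0) (f : W ⟶ Z) : f = 0 := by
  obtain ⟨J, _, V, p, i, hV, hpi⟩ := hC Z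
  rw [← Category.comp_id f, ← hpi, Preadditive.comp_sum]
  refine Finset.sum_eq_zero fun j _ ↦ ?_
  by_cases hj : P (V j)
  · rw [← Category.assoc, hW _ (hV j) hj (f ≫ p j), zero_comp]
  · rw [hZ _ (hV j) hj (i j), comp_zero, comp_zero]

lemma IsKrullSchmidt.exists_projection (hC : IsKrullSchmidt C) (P : ObjectProperty C) (G : C) :
    ∃ e : G ⟶ G,
      (∀ W, (∀ V, IsFittingObject V → P V → ∀ f : W ⟶ V, f = 0) → ∀ φ : W ⟶ G, φ ≫ e = φ) ∧
      ∀ Z, (∀ V, IsFittingObject V → ¬ P V → ∀ f : V ⟶ Z, f = 0) → ∀ ψ : G ⟶ Z, e ≫ ψ = 0 := by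
  classical
  obtain ⟨J, _, V, p, i, hV, hpi⟩ := hC G
  refine ⟨∑ j with ¬ P (V j), p j ≫ i j, fun W hW φ ↦ ?_, fun Z hZ ψ ↦ ?_⟩
  · have hφ : φ ≫ ∑ j with P (V j), p j ≫ i j = 0 := by
      rw [Preadditive.comp_sum]
      refine Finset.sum_eq_zero fun j hj ↦ ?_
      rw [← Category.assoc, hW _ (hV j) (Finset.mem_filter.1 hj).2 (φ ≫ p j), zero_comp]
    rw [← zero_add (φ ≫ _), ← hφ, ← Preadditive.comp_add, Finset.sum_filter_add_sum_filter_not,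
      hpi, Category.comp_id]
  · rw [Preadditive.sum_comp]
    refine Finset.sum_eq_zero fun j hj ↦ ?_
    rw [Category.assoc, hZ _ (hV j) (Finset.mem_filter.1 hj).2 (i j ≫ ψ), comp_zero]

lemma IsKrullSchmidt.isSplitTorsionPair (hC : IsKrullSchmidt C) {P : ObjectProperty C}
    (hP : ∀ ⦃X Y : C⦄, FittingStep X Y → P Y → P X) :
    IsSplitTorsionPair (fun W : C ↦ ∀ V, IsFittingObject V → P V → ∀ f : W ⟶ V, f = 0)
      (fun Z : C ↦ ∀ V, IsFittingObject V → ¬ P V → ∀ f : V ⟶ Z, f = 0) where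
  torsion_iff W := by
    refine ⟨fun hW Z hZ ↦ hC.hom_eq_zero hW hZ, fun hW V hV hPV ↦ hW V fun V' hV' hPV' f ↦ ?_⟩
    by_contra hf
    exact hPV' (hP ⟨hV', hV, f, hf⟩ hPV)
  free_iff Z := by
    refine ⟨fun hZ W hW ↦ hC.hom_eq_zero hW hZ, fun hZ V hV hPV ↦ hZ V fun V' hV' hPV' f ↦ ?_⟩
    by_contra hf
    exact hPV (hP ⟨hV, hV', f, hf⟩ hPV')
  exists_projection := hC.exists_projection P

lemma exists_preservesAdmissible {T F : ObjectProperty C} (h : IsSplitTorsionPair T F) {X : C}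
    (hF : ∀ Z : C, IsFittingObject Z → Relation.ReflTransGen FittingStep Z X → F Z) {Z : C}
    (hXZ : Relation.TransGen IrreducibleStep X Z) (hZX : Relation.ReflTransGen FittingStep Z X) :
    ∃ c : X ⟶ Z, ¬ IsSplitMono c ∧ PreservesAdmissible T F c := by
  induction hXZ with
  | single hstep =>
    obtain ⟨-, hZ, g, hg⟩ := hstep
    exact ⟨g, hg.not_isSplitMono, .of_isIrreducibleHom h hg (hg.isIso_id_add hZ) (hF _ hZ hZX)⟩
  | tail _ hstep ih =>
    obtain ⟨c, hc, hc'⟩ := ih (.head hstep.fittingStep hZX)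
    obtain ⟨-, hZ, g, hg⟩ := hstep
    exact ⟨c ≫ g, fun _ ↦ hc (.mk' ⟨g ≫ retraction (c ≫ g), by
      rw [← Category.assoc, IsSplitMono.id]⟩),
      hc'.comp (.of_isIrreducibleHom h hg (hg.isIso_id_add hZ) (hF _ hZ hZX))⟩

/- Let `T` be orthogonal to the objects with a path of nonzero morphisms to `X`. If `Y` is not among
these, then `f` is admissible. Pushing it out along the cycle through `X` any number of times keeps
it admissible, but the cycle composes to a nilpotent endomorphism, and pushing out along `0` makes
the torsion-free object `X` a direct summand of a torsion object. -/
lemma IsKrullSchmidt.reflTransGen_of_mono (hC : IsKrullSchmidt C) {X Y : C} {f : X ⟶ Y} [Mono f]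
    (hf : IsIrreducibleHom f) (hY : IsFittingObject Y)
    (hX : Relation.TransGen IrreducibleStep X X) : Relation.ReflTransGen FittingStep Y X := by
  by_contra hYX
  have hXfit : IsFittingObject X :=
    have ⟨_, hstep, _⟩ := Relation.TransGen.head'_iff.1 hX
    hstep.1
  have h := hC.isSplitTorsionPair (P := fun V ↦ Relation.ReflTransGen FittingStep V X)
    fun _ _ hstep hYX ↦ .head hstep hYX
  have hfree (Z : C) (hZ : IsFittingObject Z) (hZX : Relation.ReflTransGen FittingStep Z X)
      (V : C) (hV : IsFittingObject V) (hVX : ¬ Relation.ReflTransGen FittingStep V X)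
      (φ : V ⟶ Z) : φ = 0 :=
    by_contra fun hφ ↦ hVX (.head ⟨hV, hZ, φ, hφ⟩ hZX)
  have htors (V : C) (hV : IsFittingObject V) (hVX : Relation.ReflTransGen FittingStep V X)
      (φ : Y ⟶ V) : φ = 0 :=
    by_contra fun hφ ↦ hYX (.head ⟨hY, hV, φ, hφ⟩ hVX)
  obtain ⟨c, hc, hc'⟩ := exists_preservesAdmissible h hfree hX .refl
  obtain hiso | ⟨n, hn⟩ := hXfit.2 c
  · exact hc inferInstance
  · exact hXfit.1 (PreservesAdmissible.isZero_of_zero h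
      (.of_isIrreducibleHom h hf (hfree X hXfit .refl) htors) (hn ▸ hc'.pow n))

section Duality

open Opposite

lemma isFittingObject_op_iff {X : C} : IsFittingObject (op X) ↔ IsFittingObject X := by
  refine and_congr (not_congr ⟨fun h ↦ h.unop, fun h ↦ h.op⟩) ⟨fun h f ↦ ?_, fun h f ↦ ?_⟩
  · refine (h f.op).imp (isIso_op_iff f).1 fun ⟨n, hn⟩ ↦ ⟨n, ?_⟩
    exact Quiver.Hom.op_inj ((op_pow f n).trans hn)
  · refine (h f.unop).imp (isIso_unop_iff f).1 fun ⟨n, hn⟩ ↦ ⟨n, ?_⟩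
    exact (op_pow f.unop n).symm.trans (congrArg Quiver.Hom.op hn)

lemma IsKrullSchmidt.opposite (hC : IsKrullSchmidt C) : IsKrullSchmidt Cᵒᵖ := fun G ↦
  have ⟨J, _, V, p, i, hV, hpi⟩ := hC G.unop
  ⟨J, _, fun j ↦ Opposite.op (V j), fun j ↦ (i j).op, fun j ↦ (p j).op,
    fun j ↦ isFittingObject_op_iff.2 (hV j), by
      rw [← op_id_unop, ← hpi, CategoryTheory.op_sum]
      rfl⟩

lemma IsIrreducibleHom.mono_or_epi {X Y : C} {f : X ⟶ Y} (hf : IsIrreducibleHom f) :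
    Mono f ∨ Epi f := by
  obtain _ | _ := hf.isSplitMono_or_isSplitEpi _ _ (image.fac f)
  · exact .inl (image.fac f ▸ mono_comp (factorThruImage f) (image.ι f))
  · exact .inr (image.fac f ▸ epi_comp (factorThruImage f) (image.ι f))

theorem IsKrullSchmidt.reflTransGen_of_irreducibleStep (hC : IsKrullSchmidt C) {X Y : C}
    (hXY : IrreducibleStep X Y) (hX : Relation.TransGen IrreducibleStep X X)
    (hY : Relation.TransGen IrreducibleStep Y Y) : Relation.ReflTransGen FittingStep Y X := by
  obtain ⟨hXfit, hYfit, f, hf⟩ := hXY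
  obtain _ | _ := hf.mono_or_epi
  · exact hC.reflTransGen_of_mono hf hYfit hX
  · have hYop : Relation.TransGen IrreducibleStep (op Y) (op Y) :=
      Relation.transGen_swap.1 (Relation.TransGen.lift op (fun _ _ ⟨hU, hV, g, hg⟩ ↦
        ⟨isFittingObject_op_iff.2 hV, isFittingObject_op_iff.2 hU, g.op, hg.op⟩) _ _ hY)
    have hpath := hC.opposite.reflTransGen_of_mono hf.op (isFittingObject_op_iff.2 hXfit) hYop
    exact Relation.reflTransGen_swap.1 (Relation.ReflTransGen.lift unop
      (fun _ _ ⟨hU, hV, g, hg⟩ ↦ ⟨isFittingObject_op_iff.1 hV, isFittingObject_op_iff.1 hU, g.unop,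
        fun h ↦ hg (Quiver.Hom.unop_inj h)⟩) _ _ hpath)

end Duality

end KrullSchmidt

section KrullSchmidtModules

variable {R : Type u} [Ring R] {X Y Z : ModA R}

instance (X : ModA R) : IsNoetherian R X.M :=
  (isFiniteLength_iff_isNoetherian_isArtinian.1 X.finLen).1

instance (X : ModA R) : IsArtinian R X.M :=
  (isFiniteLength_iff_isNoetherian_isArtinian.1 X.finLen).2

/-- A module of finite length as an object of `mod R`. -/
abbrev toModA (R : Type u) [Ring R] (M : Type u) [AddCommGroup M] [Module R M] [IsNoetherian R M]
    [IsArtinian R M] : ModA R :=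
  ⟨M, isFiniteLength_iff_isNoetherian_isArtinian.2 ⟨inferInstance, inferInstance⟩⟩

lemma bijective_or_isNilpotent (hX : X.IsIndec) (f : Module.End R X.M) :
    Function.Bijective f ∨ IsNilpotent f := by
  obtain ⟨n, hn⟩ := Filter.eventually_atTop.1 f.eventually_isCompl_ker_pow_range_pow
  have hcompl := hn (n + 1) n.le_succ
  have hker := Submodule.range_projection hcompl
  obtain h | h := hX.2 _ (Submodule.isIdempotentElem_projection hcompl)
  · rw [h, LinearMap.range_zero] at hker
    refine .inl (IsArtinian.bijective_of_injective_endomorphism f ?_)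
    have hinj : Function.Injective (f ^ (n + 1)) := LinearMap.ker_eq_bot.1 hker.symm
    rw [pow_succ, Module.End.coe_mul] at hinj
    exact hinj.of_comp
  · rw [h, Module.End.one_eq_id, LinearMap.range_id] at hker
    exact .inr ⟨n + 1, LinearMap.ker_eq_top.1 hker.symm⟩

lemma splitMonoMap_of_bijective_comp {a : X.M →ₗ[R] Y.M} {b : Y.M →ₗ[R] Z.M}
    (h : Function.Bijective (b ∘ₗ a)) : SplitMonoMap a :=
  ⟨(LinearEquiv.ofBijective _ h).symm ∘ₗ b,
    LinearMap.ext (LinearEquiv.ofBijective _ h).symm_apply_apply⟩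

lemma splitEpiMap_of_bijective_comp {a : X.M →ₗ[R] Y.M} {b : Y.M →ₗ[R] Z.M}
    (h : Function.Bijective (b ∘ₗ a)) : SplitEpiMap b :=
  ⟨a ∘ₗ (LinearEquiv.ofBijective _ h).symm,
    LinearMap.ext (LinearEquiv.ofBijective _ h).apply_symm_apply⟩

lemma comp_eq_id_of_comp_eq_id (hX : X.IsIndec) (hY : Y.IsIndec) {i : X.M →ₗ[R] Y.M}
    {r : Y.M →ₗ[R] X.M} (h : r ∘ₗ i = LinearMap.id) : i ∘ₗ r = LinearMap.id := by
  refine (hY.2 (i ∘ₗ r) ?_).resolve_left fun h0 ↦ ?_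
  · exact LinearMap.ext fun y ↦ congrArg i (LinearMap.congr_fun h (r y))
  · have := hX.1
    refine one_ne_zero (α := Module.End R X.M) ?_
    calc (1 : Module.End R X.M) = r ∘ₗ (i ∘ₗ r) ∘ₗ i := by
          rw [LinearMap.comp_assoc, h, ← LinearMap.comp_assoc, h]; rfl
      _ = 0 := by rw [h0, LinearMap.zero_comp, LinearMap.comp_zero]

lemma bijective_of_splitMonoMap (hX : X.IsIndec) (hY : Y.IsIndec) {f : X.M →ₗ[R] Y.M}
    (hf : SplitMonoMap f) : Function.Bijective f :=
  have ⟨_, hr⟩ := hf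
  Function.bijective_iff_has_inverse.2
    ⟨_, LinearMap.congr_fun hr, LinearMap.congr_fun (comp_eq_id_of_comp_eq_id hX hY hr)⟩

lemma bijective_of_splitEpiMap (hX : X.IsIndec) (hY : Y.IsIndec) {f : X.M →ₗ[R] Y.M}
    (hf : SplitEpiMap f) : Function.Bijective f :=
  have ⟨_, hs⟩ := hf
  Function.bijective_iff_has_inverse.2
    ⟨_, LinearMap.congr_fun (comp_eq_id_of_comp_eq_id hY hX hs), LinearMap.congr_fun hs⟩

lemma not_inRad_id (hX : X.IsIndec) : ¬ InRad (LinearMap.id : X.M →ₗ[R] X.M) := fun h ↦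
  h X hX LinearMap.id LinearMap.id Function.bijective_id

lemma inRad_comp_right {f : Y.M →ₗ[R] Z.M} (hf : InRad f) (g : X.M →ₗ[R] Y.M) :
    InRad (f ∘ₗ g) := fun V hV a b ↦ hf V hV (g ∘ₗ a) b

lemma inRad_comp_left {f : X.M →ₗ[R] Y.M} (hf : InRad f) (g : Y.M →ₗ[R] Z.M) :
    InRad (g ∘ₗ f) := fun V hV a b ↦ hf V hV a (b ∘ₗ g)

lemma inRad_iff_not_splitMonoMap (hX : X.IsIndec) {f : X.M →ₗ[R] Y.M} :
    InRad f ↔ ¬ SplitMonoMap f := by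
  refine ⟨fun hf ⟨r, hr⟩ ↦ not_inRad_id hX (hr ▸ inRad_comp_left hf r), fun hf V hV a b hb ↦ hf ?_⟩
  have ha := bijective_of_splitMonoMap hV hX (splitMonoMap_of_bijective_comp (b := b ∘ₗ f) hb)
  exact splitMonoMap_of_bijective_comp (b := b) ((Function.Bijective.of_comp_iff _ ha).1 hb)

lemma inRad_iff_not_splitEpiMap (hY : Y.IsIndec) {f : X.M →ₗ[R] Y.M} :
    InRad f ↔ ¬ SplitEpiMap f := by
  refine ⟨fun hf ⟨s, hs⟩ ↦ not_inRad_id hY (hs ▸ inRad_comp_right hf s), fun hf V hV a b hb ↦ hf ?_⟩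
  have hb' := bijective_of_splitEpiMap hY hV (splitEpiMap_of_bijective_comp (a := f ∘ₗ a) hb)
  exact splitEpiMap_of_bijective_comp (a := a) ((Function.Bijective.of_comp_iff' hb' _).1 hb)

/-- The module is a finite direct sum of indecomposable modules; the summands are recorded by
their inclusions and projections. -/
def HasIndecDecomposition (Z : ModA R) : Prop :=
  ∃ (J : Type) (_ : Fintype J) (V : J → ModA R) (i : ∀ j, (V j).M →ₗ[R] Z.M)
    (p : ∀ j, Z.M →ₗ[R] (V j).M), (∀ j, (V j).IsIndec) ∧ (∀ j, p j ∘ₗ i j = LinearMap.id) ∧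
      ∑ j, i j ∘ₗ p j = LinearMap.id

lemma comp_comp_comp_eq_id {i : Y.M →ₗ[R] Z.M} {p : Z.M →ₗ[R] Y.M} {a : X.M →ₗ[R] Y.M}
    {b : Y.M →ₗ[R] X.M} (hpi : p ∘ₗ i = LinearMap.id) (hba : b ∘ₗ a = LinearMap.id) :
    (b ∘ₗ p) ∘ₗ i ∘ₗ a = LinearMap.id := by
  rw [LinearMap.comp_assoc, ← LinearMap.comp_assoc a, hpi, LinearMap.id_comp, hba]

lemma HasIndecDecomposition.of_add_eq_id {Z₁ Z₂ : ModA R} {i₁ : Z₁.M →ₗ[R] Z.M}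
    {p₁ : Z.M →ₗ[R] Z₁.M} {i₂ : Z₂.M →ₗ[R] Z.M} {p₂ : Z.M →ₗ[R] Z₂.M}
    (hi₁ : p₁ ∘ₗ i₁ = LinearMap.id) (hi₂ : p₂ ∘ₗ i₂ = LinearMap.id)
    (h : i₁ ∘ₗ p₁ + i₂ ∘ₗ p₂ = LinearMap.id) (h₁ : HasIndecDecomposition Z₁)
    (h₂ : HasIndecDecomposition Z₂) : HasIndecDecomposition Z := by
  obtain ⟨J₁, _, V₁, a₁, b₁, hV₁, hr₁, hs₁⟩ := h₁
  obtain ⟨J₂, _, V₂, a₂, b₂, hV₂, hr₂, hs₂⟩ := h₂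
  refine ⟨J₁ ⊕ J₂, inferInstance, Sum.elim V₁ V₂,
    Sum.rec (fun j ↦ i₁ ∘ₗ a₁ j) (fun j ↦ i₂ ∘ₗ a₂ j),
    Sum.rec (fun j ↦ b₁ j ∘ₗ p₁) (fun j ↦ b₂ j ∘ₗ p₂), Sum.rec hV₁ hV₂,
    Sum.rec (fun j ↦ comp_comp_comp_eq_id hi₁ (hr₁ j)) (fun j ↦ comp_comp_comp_eq_id hi₂ (hr₂ j)),
    ?_⟩
  rw [Fintype.sum_sum_type, ← h]
  have h₁ (x) : ∑ j, a₁ j (b₁ j x) = x := by simpa using LinearMap.congr_fun hs₁ x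
  have h₂ (x) : ∑ j, a₂ j (b₂ j x) = x := by simpa using LinearMap.congr_fun hs₂ x
  ext z
  simp only [LinearMap.add_apply, LinearMap.sum_apply]
  change ∑ j, i₁ (a₁ j (b₁ j (p₁ z))) + ∑ j, i₂ (a₂ j (b₂ j (p₂ z))) = i₁ (p₁ z) + i₂ (p₂ z)
  rw [← map_sum, ← map_sum, h₁, h₂]

lemma exists_isIdempotentElem_of_not_isIndec [Nontrivial Z.M] (hZ : ¬ Z.IsIndec) :
    ∃ f : Module.End R Z.M, IsIdempotentElem f ∧ f ≠ 0 ∧ f ≠ 1 := by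
  by_contra! h
  exact hZ ⟨‹_›, fun f hf ↦ or_iff_not_imp_left.2 (h f hf)⟩

lemma length_range_lt {f : Module.End R Z.M} (hf : IsIdempotentElem f) (h1 : f ≠ 1) :
    Module.length R (LinearMap.range f) < Module.length R Z.M := by
  refine Submodule.length_lt fun htop ↦ h1 (LinearMap.ext fun z ↦ ?_)
  exact (LinearMap.IsIdempotentElem.mem_range_iff hf).1 (htop ▸ Submodule.mem_top)

lemma rangeRestrict_comp_subtype {f : Module.End R Z.M} (hf : IsIdempotentElem f) :
    f.rangeRestrict ∘ₗ (LinearMap.range f).subtype = LinearMap.id :=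
  LinearMap.ext fun z ↦ Subtype.ext ((LinearMap.IsIdempotentElem.mem_range_iff hf).1 z.2)

theorem hasIndecDecomposition (Z : ModA R) : HasIndecDecomposition Z := by
  induction hn : Module.length R Z.M using WellFoundedLT.induction generalizing Z with
  | ind n ih =>
  subst hn
  obtain _ | _ := subsingleton_or_nontrivial Z.M
  · exact ⟨Empty, inferInstance, Empty.elim, Empty.rec, Empty.rec, Empty.rec,
      Empty.rec, LinearMap.ext fun z ↦ Subsingleton.elim _ _⟩
  by_cases hZ : Z.IsIndec
  · exact ⟨Unit, inferInstance, fun _ ↦ Z, fun _ ↦ LinearMap.id, fun _ ↦ LinearMap.id,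
      fun _ ↦ hZ, fun _ ↦ rfl, by simp⟩
  obtain ⟨f, hf, h0, h1⟩ := exists_isIdempotentElem_of_not_isIndec hZ
  let g : Module.End R Z.M := 1 - f
  refine .of_add_eq_id (Z₁ := toModA R (LinearMap.range f)) (Z₂ := toModA R (LinearMap.range g))
    (i₁ := (LinearMap.range f).subtype) (p₁ := f.rangeRestrict)
    (i₂ := (LinearMap.range g).subtype) (p₂ := g.rangeRestrict)
    (rangeRestrict_comp_subtype hf) (rangeRestrict_comp_subtype hf.one_sub)
    (add_sub_cancel f (1 : Module.End R Z.M)) (ih _ (length_range_lt hf h1) _ rfl)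
    (ih _ (length_range_lt hf.one_sub fun h ↦ h0 ?_) _ rfl)
  simpa using h

lemma exists_indec_summand_comp_ne_zero {M : Type u} [AddCommGroup M] [Module R M]
    {h : M →ₗ[R] Z.M} (hh : h ≠ 0) :
    ∃ (V : IndecModA R) (i : V.1.M →ₗ[R] Z.M) (p : Z.M →ₗ[R] V.1.M),
      p ∘ₗ i = LinearMap.id ∧ p ∘ₗ h ≠ 0 := by
  obtain ⟨J, _, V, i, p, hV, hpi, hip⟩ := hasIndecDecomposition Z
  obtain ⟨j, hj⟩ : ∃ j, p j ∘ₗ h ≠ 0 := by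
    by_contra! hall
    refine hh ?_
    ext m
    calc h m = ∑ j, i j (p j (h m)) := by simpa using (LinearMap.congr_fun hip (h m)).symm
      _ = 0 := Finset.sum_eq_zero fun j _ ↦ by
          rw [← LinearMap.comp_apply (p j), hall, LinearMap.zero_apply, map_zero]
  exact ⟨⟨V j, hV j⟩, i j, p j, hpi j, hj⟩

lemma exists_indec_summand_ne_zero_comp {M : Type u} [AddCommGroup M] [Module R M]
    {h : Z.M →ₗ[R] M} (hh : h ≠ 0) :
    ∃ (V : IndecModA R) (i : V.1.M →ₗ[R] Z.M) (p : Z.M →ₗ[R] V.1.M),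
      p ∘ₗ i = LinearMap.id ∧ h ∘ₗ i ≠ 0 := by
  obtain ⟨J, _, V, i, p, hV, hpi, hip⟩ := hasIndecDecomposition Z
  obtain ⟨j, hj⟩ : ∃ j, h ∘ₗ i j ≠ 0 := by
    by_contra! hall
    refine hh ?_
    ext z
    calc h z = h (∑ j, i j (p j z)) := by simpa using congrArg h (LinearMap.congr_fun hip z).symm
      _ = ∑ j, (h ∘ₗ i j) (p j z) := map_sum h _ _
      _ = 0 := Finset.sum_eq_zero fun j _ ↦ by rw [hall, LinearMap.zero_apply]
  exact ⟨⟨V j, hV j⟩, i j, p j, hpi j, hj⟩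

end KrullSchmidtModules

section FiniteLengthCategory

lemma isClosedUnderFiniteProducts_of_isSerreClass {C : Type*} [Category* C] [Abelian C]
    (P : ObjectProperty C) [P.IsSerreClass] : P.IsClosedUnderFiniteProducts :=
  have : P.IsClosedUnderBinaryProducts :=
    ⟨fun _ ⟨p⟩ ↦ P.prop_of_iso (IsLimit.conePointUniqueUpToIso (BinaryBiproduct.isLimit _ _)
      ((IsLimit.postcomposeHomEquiv (diagramIsoPair p.diag) _).2 p.isLimit))
      (P.prop_biprod (p.prop_diag_obj ⟨.left⟩) (p.prop_diag_obj ⟨.right⟩))⟩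
  .mk'

variable (R : Type u) [Ring R]

/-- The Serre class of modules of finite length. -/
def finiteLength : ObjectProperty (ModuleCat.{u} R) := fun M ↦ IsFiniteLength R M

instance : (finiteLength R).IsSerreClass where
  exists_zero := ⟨.of R PUnit, ModuleCat.isZero_of_subsingleton _,
    .of_subsingleton (M := PUnit)⟩
  prop_of_mono f _ h := IsFiniteLength.of_injective h ((ModuleCat.mono_iff_injective f).1 ‹_›)
  prop_of_epi f _ h := IsFiniteLength.of_surjective h ((ModuleCat.epi_iff_surjective f).1 ‹_›)
  prop_X₂_of_shortExact {S} hS h₁ h₃ := by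
    have hlen := Module.length_eq_add_of_exact S.f.hom S.g.hom
      ((ModuleCat.mono_iff_injective _).1 hS.mono_f) ((ModuleCat.epi_iff_surjective _).1 hS.epi_g)
      ((ShortComplex.ShortExact.moduleCat_exact_iff_function_exact _).1 hS.exact)
    rw [finiteLength, ← Module.length_ne_top_iff] at h₁ h₃ ⊢
    rw [hlen]
    exact WithTop.add_ne_top.2 ⟨h₁, h₃⟩

instance : (finiteLength R).IsClosedUnderFiniteProducts :=
  isClosedUnderFiniteProducts_of_isSerreClass _

variable {R} {X Y : ModA R}

/-- An object of `mod R` as an object of the abelian category of modules of finite length. -/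
abbrev toFinLen (X : ModA R) : (finiteLength R).FullSubcategory :=
  ⟨ModuleCat.of R X.M, X.finLen⟩

/-- Inverse of `toFinLen` on objects. -/
abbrev ofFinLen (X : (finiteLength R).FullSubcategory) : ModA R where
  M := X.obj
  finLen := X.property

/-- A linear map as a morphism in the abelian category of modules of finite length. -/
abbrev finLenHom (f : X.M →ₗ[R] Y.M) : toFinLen X ⟶ toFinLen Y :=
  (finiteLength R).homMk (ModuleCat.ofHom f)

lemma isIrreducibleHom_finLenHom {f : X.M →ₗ[R] Y.M} (hf : IsIrred f) :
    IsIrreducibleHom (finLenHom f) where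
  not_isSplitMono h := hf.1 ⟨(retraction (finLenHom f)).hom.hom,
    congrArg (·.hom.hom) (IsSplitMono.id (finLenHom f))⟩
  not_isSplitEpi h := hf.2.1 ⟨(section_ (finLenHom f)).hom.hom,
    congrArg (·.hom.hom) (IsSplitEpi.id (finLenHom f))⟩
  isSplitMono_or_isSplitEpi Z g h hgh := by
    refine (hf.2.2 (ofFinLen Z) g.hom.hom h.hom.hom (congrArg (·.hom.hom) hgh)).imp ?_ ?_
    · exact fun ⟨r, hr⟩ ↦ .mk' ⟨finLenHom r, congrArg (fun f ↦ finLenHom f) hr⟩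
    · exact fun ⟨s, hs⟩ ↦ .mk' ⟨finLenHom s, congrArg (fun f ↦ finLenHom f) hs⟩

lemma isIso_finLenHom_iff {f : X.M →ₗ[R] Y.M} : IsIso (finLenHom f) ↔ Function.Bijective f := by
  rw [← ObjectProperty.isIso_hom_iff]
  exact ConcreteCategory.isIso_iff_bijective (ModuleCat.ofHom f)

lemma isZero_toFinLen_iff : IsZero (toFinLen X) ↔ Subsingleton X.M := by
  rw [IsZero.iff_id_eq_zero]
  refine ⟨fun h ↦ ⟨fun x y ↦ ?_⟩, fun _ ↦ ?_⟩
  · have hid : (LinearMap.id : X.M →ₗ[R] X.M) = 0 := congrArg (·.hom.hom) h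
    exact (LinearMap.congr_fun hid x).trans (LinearMap.congr_fun hid y).symm
  · exact congrArg (fun f ↦ finLenHom f) (Subsingleton.elim (LinearMap.id : X.M →ₗ[R] X.M) 0)

lemma finLenHom_sum {J : Type*} (s : Finset J) (f : J → (X.M →ₗ[R] Y.M)) :
    finLenHom (∑ j ∈ s, f j) = ∑ j ∈ s, finLenHom (f j) :=
  map_sum (AddMonoidHom.mk' (fun f : X.M →ₗ[R] Y.M ↦ finLenHom f) fun _ _ ↦ rfl) f s

lemma finLenHom_pow (f : Module.End R X.M) (n : ℕ) :
    finLenHom (f ^ n) = (show End (toFinLen X) from finLenHom f) ^ n := by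
  induction n with
  | zero => rfl
  | succ n ih => rw [pow_succ, pow_succ, ← ih]; rfl

lemma isFittingObject_toFinLen (hX : X.IsIndec) : IsFittingObject (toFinLen X) := by
  have := hX.1
  refine ⟨isZero_toFinLen_iff.not.2 (not_subsingleton _), fun f ↦ ?_⟩
  refine (bijective_or_isNilpotent hX f.hom.hom).imp isIso_finLenHom_iff.2 fun ⟨n, hn⟩ ↦ ⟨n, ?_⟩
  exact (finLenHom_pow f.hom.hom n).symm.trans (congrArg (fun f ↦ finLenHom f) hn)

lemma isIndec_of_isFittingObject {X : (finiteLength R).FullSubcategory}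
    (hX : IsFittingObject X) : (ofFinLen X).IsIndec := by
  refine ⟨not_subsingleton_iff_nontrivial.1 (isZero_toFinLen_iff.not.1 hX.1), fun f hf ↦ ?_⟩
  obtain h | ⟨n, hn⟩ := hX.2 (finLenHom (X := ofFinLen X) (Y := ofFinLen X) f)
  · refine .inr (LinearMap.ext fun x ↦ ?_)
    exact (isIso_finLenHom_iff.1 h).injective (LinearMap.congr_fun hf x)
  · have hpow : f ^ n = 0 := congrArg (·.hom.hom) ((finLenHom_pow f n).trans hn)
    refine .inl ?_
    rw [← IsIdempotentElem.pow_succ_eq n hf, pow_succ, hpow, zero_mul]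

lemma isKrullSchmidt_finiteLength : IsKrullSchmidt (finiteLength R).FullSubcategory := by
  intro G
  obtain ⟨J, _, V, i, p, hV, -, hip⟩ := hasIndecDecomposition (ofFinLen G)
  refine ⟨J, inferInstance, fun j ↦ toFinLen (V j), fun j ↦ finLenHom (p j),
    fun j ↦ finLenHom (i j), fun j ↦ isFittingObject_toFinLen (hV j), ?_⟩
  calc ∑ j, finLenHom (p j) ≫ finLenHom (i j) = finLenHom (∑ j, i j ∘ₗ p j) :=
        (finLenHom_sum Finset.univ fun j ↦ i j ∘ₗ p j).symm
    _ = 𝟙 G := congrArg (fun f ↦ finLenHom (X := ofFinLen G) (Y := ofFinLen G) f) hip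

end FiniteLengthCategory

section HomPaths

variable {R : Type u} [Ring R]

/-- `HomStep X Y`: the indecomposable modules `X` and `Y` admit a nonzero homomorphism `X → Y`. -/
def HomStep (X Y : IndecModA R) : Prop := ∃ f : X.1.M →ₗ[R] Y.1.M, f ≠ 0

/-- `IrredStep X Y`: the indecomposable modules `X` and `Y` admit an irreducible homomorphism
`X → Y`. -/
def IrredStep (X Y : IndecModA R) : Prop := ∃ f : X.1.M →ₗ[R] Y.1.M, IsIrred f

lemma IrredStep.irreducibleStep {X Y : IndecModA R} (h : IrredStep X Y) :
    IrreducibleStep (toFinLen X.1) (toFinLen Y.1) :=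
  have ⟨f, hf⟩ := h
  ⟨isFittingObject_toFinLen X.2, isFittingObject_toFinLen Y.2, finLenHom f,
    isIrreducibleHom_finLenHom hf⟩

lemma reflTransGen_homStep_of_fittingStep {X Y : (finiteLength R).FullSubcategory}
    (hX : IsFittingObject X) (hY : IsFittingObject Y) (h : Relation.ReflTransGen FittingStep X Y) :
    Relation.ReflTransGen HomStep (⟨ofFinLen X, isIndec_of_isFittingObject hX⟩ : IndecModA R)
      ⟨ofFinLen Y, isIndec_of_isFittingObject hY⟩ := by
  induction h with
  | refl => exact .refl
  | tail _ hstep ih =>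
    obtain ⟨hZ, -, f, hf⟩ := hstep
    exact (ih hZ).tail ⟨f.hom.hom, fun h ↦ hf (ObjectProperty.hom_ext _ (ModuleCat.hom_ext h))⟩

theorem reflTransGen_homStep_of_irredStep {X Y : IndecModA R} (hXY : IrredStep X Y)
    (hX : Relation.TransGen IrredStep X X) (hY : Relation.TransGen IrredStep Y Y) :
    Relation.ReflTransGen HomStep Y X :=
  have hlift (Z : IndecModA R) (hZ : Relation.TransGen IrredStep Z Z) :
      Relation.TransGen IrreducibleStep (toFinLen Z.1) (toFinLen Z.1) :=
    hZ.lift (fun Z ↦ toFinLen Z.1) fun _ _ ↦ IrredStep.irreducibleStep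
  reflTransGen_homStep_of_fittingStep (isFittingObject_toFinLen Y.2)
    (isFittingObject_toFinLen X.2) (isKrullSchmidt_finiteLength.reflTransGen_of_irreducibleStep
      hXY.irreducibleStep (hlift X hX) (hlift Y hY))

end HomPaths

section Radical

variable {R : Type u} [Ring R] {X Y Z : ModA R}

lemma radPow_comp_right {n : ℕ} {f : Y.M →ₗ[R] Z.M} (hf : f ∈ radPow R n Y Z)
    (g : X.M →ₗ[R] Y.M) : f ∘ₗ g ∈ radPow R n X Z := by
  cases n with
  | zero => exact AddSubgroup.mem_top _
  | succ n =>
    let precomp : (Y.M →ₗ[R] Z.M) →+ (X.M →ₗ[R] Z.M) :=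
      AddMonoidHom.mk' (fun f ↦ f ∘ₗ g) fun f f' ↦ LinearMap.add_comp g f' f
    have hle : radPow R (n + 1) Y Z ≤ (radPow R (n + 1) X Z).comap precomp := by
      rw [radPow, AddSubgroup.closure_le]
      rintro _ ⟨W, a, b, ha, hb, rfl⟩
      exact AddSubgroup.subset_closure ⟨W, a ∘ₗ g, b, inRad_comp_right ha g, hb, rfl⟩
    exact hle hf

lemma comp_mem_radPow_succ {n : ℕ} {h : Y.M →ₗ[R] Z.M} (hh : h ∈ radPow R n Y Z)
    {g : X.M →ₗ[R] Y.M} (hg : InRad g) : h ∘ₗ g ∈ radPow R (n + 1) X Z :=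
  AddSubgroup.subset_closure ⟨Y, g, h, hg, hh, rfl⟩

lemma bijective_of_notMem_radPow_one (hX : X.IsIndec) (hY : Y.IsIndec) {f : X.M →ₗ[R] Y.M}
    (hf : f ∉ radPow R 1 X Y) : Function.Bijective f := by
  have hrad : ¬ InRad f := fun hr ↦
    hf (comp_mem_radPow_succ (h := LinearMap.id) (AddSubgroup.mem_top _) hr)
  exact bijective_of_splitMonoMap hX hY (not_not.1 ((inRad_iff_not_splitMonoMap hX).not.1 hrad))

lemma exists_comp_notMem_radPow {n : ℕ} {f : X.M →ₗ[R] Y.M} (hf : f ∈ radPow R (n + 1) X Y)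
    (hf' : f ∉ radPow R (n + 2) X Y) :
    ∃ (Z : ModA R) (g : X.M →ₗ[R] Z.M) (h : Z.M →ₗ[R] Y.M), Z.IsIndec ∧ InRad g ∧
      h ∈ radPow R n Z Y ∧ h ∘ₗ g ∉ radPow R (n + 2) X Y := by
  contrapose! hf'
  have hle : radPow R (n + 1) X Y ≤ radPow R (n + 2) X Y := by
    conv_lhs => rw [radPow]
    rw [AddSubgroup.closure_le]
    rintro _ ⟨Z, g, h, hg, hh, rfl⟩
    obtain ⟨J, _, V, i, p, hV, -, hip⟩ := hasIndecDecomposition Z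
    have hsum : h ∘ₗ g = ∑ j, (h ∘ₗ i j) ∘ₗ (p j ∘ₗ g) := by
      ext x
      simpa using congrArg h (LinearMap.congr_fun hip (g x)).symm
    exact hsum ▸ sum_mem fun j _ ↦ hf' (V j) (p j ∘ₗ g) (h ∘ₗ i j) (hV j)
      (inRad_comp_left hg (p j)) (radPow_comp_right hh (i j))
  exact hle hf

lemma isIrred_iff (hX : X.IsIndec) (hY : Y.IsIndec) {f : X.M →ₗ[R] Y.M} :
    IsIrred f ↔ InRad f ∧ ∀ (Z : ModA R) (g : X.M →ₗ[R] Z.M) (h : Z.M →ₗ[R] Y.M),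
      InRad g → InRad h → h ∘ₗ g ≠ f := by
  have hfactor (Z : ModA R) (g : X.M →ₗ[R] Z.M) (h : Z.M →ₗ[R] Y.M) :
      SplitMonoMap g ∨ SplitEpiMap h ↔ ¬ (InRad g ∧ InRad h) := by
    rw [inRad_iff_not_splitMonoMap hX, inRad_iff_not_splitEpiMap hY, ← not_or, not_not]
  constructor
  · rintro ⟨hmono, -, hf⟩
    exact ⟨(inRad_iff_not_splitMonoMap hX).2 hmono, fun Z g h hg hh hgh ↦
      (hfactor Z g h).1 (hf Z g h hgh) ⟨hg, hh⟩⟩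
  · rintro ⟨hrad, hf⟩
    exact ⟨(inRad_iff_not_splitMonoMap hX).1 hrad, (inRad_iff_not_splitEpiMap hY).1 hrad,
      fun Z g h hgh ↦ (hfactor Z g h).2 fun ⟨hg, hh⟩ ↦ hf Z g h hg hh hgh⟩

lemma isIrred_of_comp_notMem_radPow (hX : X.IsIndec) (hZ : Z.IsIndec) {n : ℕ}
    {g : X.M →ₗ[R] Z.M} {h : Z.M →ₗ[R] Y.M} (hg : InRad g) (hh : h ∈ radPow R n Z Y)
    (hhg : h ∘ₗ g ∉ radPow R (n + 2) X Y) : IsIrred g := by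
  refine (isIrred_iff hX hZ).2 ⟨hg, fun W a b ha hb hba ↦ hhg ?_⟩
  rw [← hba, ← LinearMap.comp_assoc]
  exact comp_mem_radPow_succ (comp_mem_radPow_succ hh hb) ha

lemma isIrred_conj {X' Y' : ModA R} (hX : X.IsIndec) (hY : Y.IsIndec) (hX' : X'.IsIndec)
    (hY' : Y'.IsIndec) {f : X.M →ₗ[R] Y.M} (hf : IsIrred f) (a : X'.M ≃ₗ[R] X.M)
    (b : Y.M ≃ₗ[R] Y'.M) : IsIrred (X := X') (Y := Y') (b.toLinearMap ∘ₗ f ∘ₗ a.toLinearMap) := by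
  rw [isIrred_iff hX hY] at hf
  refine (isIrred_iff hX' hY').2 ⟨inRad_comp_left (inRad_comp_right hf.1 _) _, ?_⟩
  refine fun Z g h hg hh hgh ↦ hf.2 Z (g ∘ₗ a.symm.toLinearMap) (b.symm.toLinearMap ∘ₗ h)
    (inRad_comp_right hg _) (inRad_comp_left hh _) (LinearMap.ext fun x ↦ ?_)
  exact (congrArg b.symm (LinearMap.congr_fun hgh (a.symm x))).trans (by simp)

end Radical

/-! ### Convexity of cycle-finite components -/

section AuslanderReitenPaths

open Relation

variable {R : Type u} [Ring R] {X Y : IndecModA R}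

lemma arVertexMk_surjective : Function.Surjective (ARVertex.mk (R := R)) :=
  Quotient.exists_rep

lemma mk_eq_mk_iff : ARVertex.mk X = ARVertex.mk Y ↔ X.1.Iso Y.1 :=
  Quotient.eq (r := isoSetoid R)

lemma mk_eq_mk_of_bijective {f : X.1.M →ₗ[R] Y.1.M} (hf : Function.Bijective f) :
    ARVertex.mk X = ARVertex.mk Y :=
  mk_eq_mk_iff.2 ⟨LinearEquiv.ofBijective f hf⟩

lemma reflTransGen_arArrow_of_mem_radPow {n : ℕ} {f : X.1.M →ₗ[R] Y.1.M}
    (hf : f ∈ radPow R n X.1 Y.1) (hf' : f ∉ radPow R (n + 1) X.1 Y.1) :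
    ReflTransGen ARArrow (ARVertex.mk X) (ARVertex.mk Y) := by
  induction n generalizing X with
  | zero =>
    rw [mk_eq_mk_of_bijective (bijective_of_notMem_radPow_one X.2 Y.2 hf')]
  | succ n ih =>
    obtain ⟨Z, g, h, hZ, hg, hh, hhg⟩ := exists_comp_notMem_radPow hf hf'
    exact .head ⟨X, ⟨Z, hZ⟩, g, isIrred_of_comp_notMem_radPow X.2 hZ hg hh hhg, rfl, rfl⟩
      (ih (X := ⟨Z, hZ⟩) hh fun hh' ↦ hhg (comp_mem_radPow_succ hh' hg))

lemma reflTransGen_arArrow_of_not_inRadInf {f : X.1.M →ₗ[R] Y.1.M} (hf : ¬ InRadInf f) :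
    ReflTransGen ARArrow (ARVertex.mk X) (ARVertex.mk Y) := by
  by_contra hpath
  refine hf fun n ↦ ?_
  induction n with
  | zero => exact AddSubgroup.mem_top _
  | succ n ih => exact by_contra fun hf' ↦ hpath (reflTransGen_arArrow_of_mem_radPow ih hf')

lemma IrredStep.of_arArrow (h : ARArrow (ARVertex.mk X) (ARVertex.mk Y)) : IrredStep X Y := by
  obtain ⟨X', Y', f, hf, hX, hY⟩ := h
  obtain ⟨a⟩ := mk_eq_mk_iff.1 hX.symm
  obtain ⟨b⟩ := mk_eq_mk_iff.1 hY
  exact ⟨_, isIrred_conj X'.2 Y'.2 X.2 Y.2 hf a b⟩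

lemma transGen_irredStep_of_arArrow (h : TransGen ARArrow (ARVertex.mk X) (ARVertex.mk Y)) :
    TransGen IrredStep X Y := by
  generalize hy : ARVertex.mk Y = y at h
  induction h generalizing Y with
  | single h => exact .single (.of_arArrow (hy ▸ h))
  | @tail z _ _ h ih =>
    obtain ⟨Z, rfl⟩ := arVertexMk_surjective z
    exact (ih rfl).tail (.of_arArrow (hy ▸ h))

end AuslanderReitenPaths

section CycleFinite

open Relation

variable {R : Type u} [Ring R] {X Y Z : IndecModA R}

lemma exists_relSeries_mem_of_reflTransGen {α : Type*} {r : SetRel α α} {a b c : α}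
    (hab : ReflTransGen (fun x y ↦ (x, y) ∈ r) a b)
    (hbc : ReflTransGen (fun x y ↦ (x, y) ∈ r) b c) :
    ∃ s : RelSeries r, s.head = a ∧ s.last = c ∧ b ∈ s := by
  induction hab using ReflTransGen.head_induction_on with
  | refl =>
    induction hbc with
    | refl => exact ⟨.singleton r b, rfl, rfl, 0, rfl⟩
    | tail _ hstep ih =>
      obtain ⟨s, hhead, rfl, hmem⟩ := ih
      exact ⟨s.snoc _ hstep, by simpa, by simp, RelSeries.mem_snoc.2 (.inl hmem)⟩
  | head hstep _ ih =>
    obtain ⟨s, rfl, hlast, hmem⟩ := ih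
    refine ⟨s.cons _ hstep, by simp, by simpa, ?_⟩
    rw [← RelSeries.mem_toList, RelSeries.toList_cons, List.mem_cons, RelSeries.mem_toList]
    exact .inr hmem

lemma comp_ne_zero_of_surjective {M N P : Type*} [AddCommGroup M] [AddCommGroup N]
    [AddCommGroup P] [Module R M] [Module R N] [Module R P] {f : N →ₗ[R] P} (hf : f ≠ 0)
    {g : M →ₗ[R] N} (hg : Function.Surjective g) : f ∘ₗ g ≠ 0 :=
  fun h ↦ hf (LinearMap.ext (hg.forall.2 (LinearMap.congr_fun h)))

lemma HomStep.of_iso (h : X.1.Iso Y.1) : HomStep X Y := by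
  obtain ⟨e⟩ := h
  have := X.2.1
  exact ⟨e.toLinearMap, fun h0 ↦ one_ne_zero (α := Module.End R X.1.M) <| LinearMap.ext fun x ↦
    e.injective ((LinearMap.congr_fun h0 x).trans (map_zero e).symm)⟩

/-- The relation on indecomposable modules of admitting a nonzero nonisomorphism: the steps of
the cycles in `ind R`. -/
def nonisoRel (R : Type u) [Ring R] : SetRel (IndecModA R) (IndecModA R) :=
  {p | ∃ f : p.1.1.M →ₗ[R] p.2.1.M, f ≠ 0 ∧ ¬ Function.Bijective f}

lemma exists_iso_reflTransGen_nonisoRel (h : ReflTransGen HomStep X Y) :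
    ∃ Y' : IndecModA R, Y'.1.Iso Y.1 ∧ ReflTransGen (fun U V ↦ (U, V) ∈ nonisoRel R) X Y' := by
  induction h with
  | refl => exact ⟨X, ⟨.refl R _⟩, .refl⟩
  | @tail _ Z _ hstep ih =>
    obtain ⟨Y', ⟨e⟩, hpath⟩ := ih
    obtain ⟨f, hf⟩ := hstep
    by_cases hbij : Function.Bijective f
    · exact ⟨Y', ⟨e.trans (.ofBijective f hbij)⟩, hpath⟩
    · exact ⟨Z, ⟨.refl R _⟩, hpath.tail ⟨f ∘ₗ e.toLinearMap,
        comp_ne_zero_of_surjective hf e.surjective,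
        fun h ↦ hbij ((Function.Bijective.of_comp_iff _ e.bijective).1 h)⟩⟩

lemma not_inRadInf_of_relSeries {s : RelSeries (nonisoRel R)} (hX : IsCycleFiniteModule X.1)
    (hs : ∃ Y ∈ s, Y.1.Iso X.1) {f : s.last.1.M →ₗ[R] s.head.1.M} (hf : f ≠ 0)
    (hbij : ¬ Function.Bijective f) : ¬ InRadInf f := by
  obtain ⟨_, ⟨k, rfl⟩, hk⟩ := hs
  let c : ModCycle R :=
    { len := s.length + 1
      len_pos := Nat.succ_pos _
      obj := Fin.cons s.last.1 (fun i ↦ (s i).1)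
      obj_indec := Fin.cases s.last.2 fun i ↦ (s i).2
      closed := rfl
      hom := Fin.cases f fun i ↦ (s.step i).choose
      hom_ne_zero := Fin.cases hf fun i ↦ (s.step i).choose_spec.1
      hom_not_iso := Fin.cases hbij fun i ↦ (s.step i).choose_spec.2 }
  exact hX.2 c ⟨k.succ, hk⟩ 0

lemma not_inRadInf_of_homPath (hX : IsCycleFiniteModule X.1) {f : Y.1.M →ₗ[R] Z.1.M}
    (hf : f ≠ 0) (hbij : ¬ Function.Bijective f) (hZX : ReflTransGen HomStep Z X)
    (hXY : ReflTransGen HomStep X Y) : ¬ InRadInf f := by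
  obtain ⟨X', ⟨e⟩, hpath⟩ := exists_iso_reflTransGen_nonisoRel hZX
  obtain ⟨Y', ⟨a⟩, hpath'⟩ := exists_iso_reflTransGen_nonisoRel (hXY.head (.of_iso ⟨e⟩))
  obtain ⟨s, rfl, rfl, hmem⟩ := exists_relSeries_mem_of_reflTransGen hpath hpath'
  exact fun hinf ↦ not_inRadInf_of_relSeries hX ⟨X', hmem, ⟨e⟩⟩ (f := f ∘ₗ a.toLinearMap)
    (comp_ne_zero_of_surjective hf a.surjective)
    (fun h ↦ hbij ((Function.Bijective.of_comp_iff _ a.bijective).1 h))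
    fun n ↦ radPow_comp_right (hinf n) _

lemma reflTransGen_arArrow_of_homStep (hX : IsCycleFiniteModule X.1) (hYZ : HomStep Y Z)
    (hZX : ReflTransGen HomStep Z X) (hXY : ReflTransGen HomStep X Y) :
    ReflTransGen ARArrow (ARVertex.mk Y) (ARVertex.mk Z) := by
  obtain ⟨f, hf⟩ := hYZ
  by_cases hbij : Function.Bijective f
  · rw [mk_eq_mk_of_bijective hbij]
  · exact reflTransGen_arArrow_of_not_inRadInf (not_inRadInf_of_homPath hX hf hbij hZX hXY)

lemma reflTransGen_arArrow_of_homPath (hX : IsCycleFiniteModule X.1)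
    (hYZ : ReflTransGen HomStep Y Z) (hZX : ReflTransGen HomStep Z X)
    (hXY : ReflTransGen HomStep X Y) :
    ReflTransGen ARArrow (ARVertex.mk Y) (ARVertex.mk Z) := by
  induction hYZ with
  | refl => exact .refl
  | tail hpath hstep ih =>
    exact (ih (hZX.head hstep)).trans
      (reflTransGen_arArrow_of_homStep hX hstep hZX (hXY.trans hpath))

end CycleFinite

section CyclicComponents

open Relation

variable {R : Type u} [Ring R] {Γ : Set (ARVertex R)} {X Y Z : IndecModA R}

lemma IrredStep.homStep (h : IrredStep X Y) : HomStep X Y := by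
  obtain ⟨f, hf⟩ := h
  obtain ⟨hrad, hfactor⟩ := (isIrred_iff X.2 Y.2).1 hf
  refine ⟨f, fun h0 ↦ hfactor X.1 ((0 : Y.1.M →ₗ[R] X.1.M) ∘ₗ f) f (inRad_comp_left hrad _) hrad ?_⟩
  rw [h0, LinearMap.zero_comp]

lemma homPath_of_arStep (hX : OnARCycle (ARVertex.mk X)) (hY : OnARCycle (ARVertex.mk Y))
    (h : ARStep (ARVertex.mk X) (ARVertex.mk Y)) : ReflTransGen HomStep X Y :=
  h.elim (fun h ↦ .single (IrredStep.of_arArrow h).homStep) fun h ↦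
    reflTransGen_homStep_of_irredStep (.of_arArrow h) (transGen_irredStep_of_arArrow hY)
      (transGen_irredStep_of_arArrow hX)

lemma homPath_of_mem_cyclicComponent (hΓ : IsCyclicComponent Γ) (hX : ARVertex.mk X ∈ Γ)
    (hY : ARVertex.mk Y ∈ Γ) : ReflTransGen HomStep X Y := by
  have hconn := hΓ.2.2.2 _ hX _ hY
  generalize hy : ARVertex.mk Y = y at hconn
  clear hY
  induction hconn generalizing Y with
  | refl => exact .single (.of_iso (mk_eq_mk_iff.1 hy.symm))
  | @tail z _ _ hstep ih =>
    obtain ⟨Z, rfl⟩ := arVertexMk_surjective z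
    subst hy
    exact (ih rfl).trans (homPath_of_arStep hstep.1 hstep.2.1 hstep.2.2)

lemma mem_cyclicComponent_of_arPath (hΓ : IsCyclicComponent Γ) {x z : ARVertex R} (hx : x ∈ Γ)
    (hxz : ReflTransGen ARArrow x z) (hzx : ReflTransGen ARArrow z x) : z ∈ Γ := by
  induction hxz with
  | refl => exact hx
  | @tail y z hxy hyz ih =>
    exact hΓ.2.2.1 y (ih (hzx.head hyz)) z (.tail' (hzx.trans hxy) hyz) (.inl hyz)

theorem mem_of_homPath_of_homPath (hΓ : IsCycleFiniteCyclicComponent Γ)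
    (hX : ARVertex.mk X ∈ Γ) (hY : ARVertex.mk Y ∈ Γ) (hXZ : ReflTransGen HomStep X Z)
    (hZY : ReflTransGen HomStep Z Y) : ARVertex.mk Z ∈ Γ := by
  obtain ⟨hcyc, _, hx, X₀, rfl, hX₀⟩ := hΓ
  have hto := (homPath_of_mem_cyclicComponent hcyc hx hX).trans hXZ
  have hfrom := hZY.trans (homPath_of_mem_cyclicComponent hcyc hY hx)
  exact mem_cyclicComponent_of_arPath hcyc hx (reflTransGen_arArrow_of_homPath hX₀ hto hfrom .refl)
    (reflTransGen_arArrow_of_homPath hX₀ hfrom .refl hto)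

end CyclicComponents

section SimpleQuotients

variable {R : Type u} [Ring R] {M N S : Type u} [AddCommGroup M] [Module R M] [AddCommGroup N]
  [Module R N] [AddCommGroup S] [Module R S]

lemma isCompFactorMod_iff :
    IsCompFactorMod R S M ↔ ∃ (L : Submodule R M) (θ : L →ₗ[R] S), Function.Surjective θ := by
  refine ⟨fun ⟨_, L, _, ⟨e⟩⟩ ↦ ⟨L, e.toLinearMap ∘ₗ Submodule.mkQ _,
    e.surjective.comp (Submodule.mkQ_surjective _)⟩, fun ⟨L, θ, hθ⟩ ↦ ?_⟩
  refine ⟨(LinearMap.ker θ).map L.subtype, L, Submodule.map_subtype_le _ _, ?_⟩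
  rw [Submodule.comap_map_eq_of_injective L.subtype_injective]
  exact ⟨θ.quotKerEquivOfSurjective hθ⟩

lemma exists_simple_quotient (R M : Type u) [Ring R] [AddCommGroup M] [Module R M]
    [IsNoetherian R M] [Nontrivial M] :
    ∃ L : Submodule R M, IsSimpleModule R (M ⧸ L) :=
  have ⟨L, hL⟩ := IsCoatomic.exists_coatom (Submodule R M)
  ⟨L, isSimpleModule_iff_isCoatom.2 hL⟩

lemma exists_simple_quotient_range [IsNoetherian R M] {φ : N →ₗ[R] M} (hφ : φ ≠ 0) :
    ∃ (L : Submodule R (LinearMap.range φ)), IsSimpleModule R (LinearMap.range φ ⧸ L) ∧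
      IsCompFactorMod R (LinearMap.range φ ⧸ L) M ∧ L.mkQ ∘ₗ φ.rangeRestrict ≠ 0 := by
  have : Nontrivial (LinearMap.range φ) :=
    Submodule.nontrivial_iff_ne_bot.2 (LinearMap.range_eq_bot.not.2 hφ)
  obtain ⟨L, hL⟩ := exists_simple_quotient R (LinearMap.range φ)
  refine ⟨L, hL, isCompFactorMod_iff.2 ⟨_, L.mkQ, L.mkQ_surjective⟩, ?_⟩
  have := IsSimpleModule.nontrivial R (LinearMap.range φ ⧸ L)
  exact LinearMap.ne_zero_of_surjective
    (L.mkQ_surjective.comp φ.surjective_rangeRestrict)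

lemma isCompFactorMod_quotient_modRadical_iff [IsArtinian R M] [IsSimpleModule R S] :
    IsCompFactorMod R S (M ⧸ modRadical R M) ↔ ∃ φ : M →ₗ[R] S, φ ≠ 0 := by
  have := IsSimpleModule.nontrivial R S
  refine ⟨fun h ↦ ?_, fun ⟨φ, hφ⟩ ↦ ?_⟩
  · obtain ⟨L, θ, hθ⟩ := isCompFactorMod_iff.1 h
    have : IsSemisimpleModule R (M ⧸ modRadical R M) :=
      (IsArtinian.isSemisimpleModule_iff_jacobson _ _).2 (Module.jacobson_quotient_jacobson _ _)
    obtain ⟨g, rfl⟩ := IsSemisimpleModule.extension_property L.subtype L.subtype_injective θ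
    exact ⟨g ∘ₗ Submodule.mkQ _,
      LinearMap.ne_zero_of_surjective
        ((Function.Surjective.of_comp (g := L.subtype) hθ).comp (Submodule.mkQ_surjective _))⟩
  · have hφ' := LinearMap.surjective_of_ne_zero hφ
    have hrad : modRadical R M ≤ LinearMap.ker φ :=
      sInf_le (LinearMap.isCoatom_ker_of_surjective hφ')
    refine isCompFactorMod_iff.2 ⟨⊤, Submodule.liftQ _ φ hrad ∘ₗ Submodule.subtype ⊤, fun s ↦ ?_⟩
    obtain ⟨m, rfl⟩ := hφ' s
    exact ⟨⟨Submodule.mkQ _ m, trivial⟩, rfl⟩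

end SimpleQuotients

section Amalgams

variable {R : Type u} [Ring R] {M N S : Type u} [AddCommGroup M] [Module R M] [AddCommGroup N]
  [Module R N] [AddCommGroup S] [Module R S]

lemma isIndecMod_of_forall_mem {w : M} (hw : w ≠ 0) (h : ∀ U : Submodule R M, U ≠ ⊥ → w ∈ U) :
    IsIndecMod R M := by
  refine ⟨⟨w, 0, hw⟩, fun φ hφ ↦ or_iff_not_imp_left.2 fun h0 ↦ ?_⟩
  obtain ⟨z, rfl⟩ := h (LinearMap.range φ) (LinearMap.range_eq_bot.not.2 h0)
  have hker : LinearMap.ker φ = ⊥ := by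
    by_contra hker
    refine hw ?_
    rw [← LinearMap.congr_fun hφ z]
    exact h _ hker
  exact LinearMap.ext fun x ↦ LinearMap.ker_eq_bot.1 hker (LinearMap.congr_fun hφ x)

lemma isIndecMod_of_isSimpleModule [IsSimpleModule R M] : IsIndecMod R M := by
  have := IsSimpleModule.nontrivial R M
  obtain ⟨w, hw⟩ := exists_ne (0 : M)
  exact isIndecMod_of_forall_mem hw fun U hU ↦ (eq_bot_or_eq_top U).resolve_left hU ▸ trivial

lemma exists_isIndecMod_quotient [IsNoetherian R M] {V₀ : Submodule R M} {w : M} (hw : w ∉ V₀) :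
    ∃ V : Submodule R M, V₀ ≤ V ∧ w ∉ V ∧ IsIndecMod R (M ⧸ V) := by
  obtain ⟨V, ⟨hV, hwV⟩, hmax⟩ :=
    wellFounded_gt.has_min {V : Submodule R M | V₀ ≤ V ∧ w ∉ V} ⟨V₀, le_rfl, hw⟩
  refine ⟨V, hV, hwV, isIndecMod_of_forall_mem (w := V.mkQ w)
    ((Submodule.Quotient.mk_eq_zero V).not.2 hwV) fun U hU ↦ ?_⟩
  by_contra hwU
  have hVU : V ≤ U.comap V.mkQ := Submodule.le_comap_mkQ V U
  refine hmax (U.comap V.mkQ) ⟨hV.trans hVU, hwU⟩ (lt_of_le_of_ne hVU fun h ↦ hU ?_)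
  rw [← Submodule.map_comap_eq_of_surjective V.mkQ_surjective U, ← h, Submodule.mkQ_map_self]

lemma exists_indec_amalgam [IsNoetherian R M] [IsArtinian R M] [IsNoetherian R N] [IsArtinian R N]
    [Nontrivial S] (hM : IsCompFactorMod R S M) (hN : IsCompFactorMod R S N) :
    ∃ (W : IndecModA R) (f : M →ₗ[R] W.1.M) (g : N →ₗ[R] W.1.M),
      f ≠ 0 ∧ g ≠ 0 ∧ LinearMap.range f ⊔ LinearMap.range g = ⊤ := by
  obtain ⟨M', θ, hθ⟩ := isCompFactorMod_iff.1 hM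
  obtain ⟨N', η, hη⟩ := isCompFactorMod_iff.1 hN
  obtain ⟨s, hs⟩ := exists_ne (0 : S)
  obtain ⟨m, rfl⟩ := hθ s
  obtain ⟨n, hn⟩ := hη (θ m)
  let V₀ := (LinearMap.ker (θ.coprod η)).map (M'.subtype.prodMap N'.subtype)
  have hm : ((m : M), (0 : N)) ∉ V₀ := by
    rintro ⟨⟨a, b⟩, hab, heq⟩
    obtain ⟨rfl, rfl⟩ : a = m ∧ b = 0 := by simpa using heq
    exact hs (by simpa using hab)
  have hmn : ((m : M), -(n : N)) ∈ V₀ := ⟨(m, -n), by simp [hn], rfl⟩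
  obtain ⟨V, hV, hmV, hW⟩ := exists_isIndecMod_quotient hm
  refine ⟨⟨toModA R ((M × N) ⧸ V), hW⟩, V.mkQ ∘ₗ LinearMap.inl R M N, V.mkQ ∘ₗ LinearMap.inr R M N,
    fun h ↦ hmV ?_, fun h ↦ hmV ?_, ?_⟩
  · exact (Submodule.Quotient.mk_eq_zero V).1 (LinearMap.congr_fun h (m : M))
  · have hn0 := (Submodule.Quotient.mk_eq_zero V).1 (LinearMap.congr_fun h (n : N))
    simpa using V.add_mem (hV hmn) hn0
  · rw [LinearMap.range_comp, LinearMap.range_comp, ← Submodule.map_sup,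
      LinearMap.sup_range_inl_inr, Submodule.map_top, Submodule.range_mkQ]

end Amalgams

/-! ### Vanishing of the composites `P ⟶ Q ⟶ P` -/

section VanishingComposites

variable {R : Type u} [Ring R] {Γ : Set (ARVertex R)} {P Q X S : Type u} [AddCommGroup P]
  [Module R P] [AddCommGroup Q] [Module R Q] [AddCommGroup X] [Module R X] [AddCommGroup S]
  [Module R S]

lemma exists_homPath_to_quotient [IsNoetherian R X] [IsArtinian R X] [Module.Projective R Q]
    {N : IndecModA R} (hQN : ∀ φ : Q →ₗ[R] N.1.M, φ = 0) {π : Q →ₗ[R] X}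
    (hπ : Function.Surjective π) [Nontrivial S] (hN : IsCompFactorMod R S N.1.M)
    (hX : IsCompFactorMod R S X) :
    ∃ (Z : IndecModA R) (μ : X →ₗ[R] Z.1.M),
      Function.Surjective μ ∧ Relation.ReflTransGen HomStep N Z := by
  obtain ⟨W, f, g, hf, hg, hfg⟩ := exists_indec_amalgam hN hX
  have hftop : LinearMap.range f ≠ ⊤ := fun htop ↦ hg <| by
    obtain ⟨h, hh⟩ := Module.projective_lifting_property f (g ∘ₗ π) (LinearMap.range_eq_top.1 htop)
    rw [← LinearMap.cancel_right hπ, ← hh, hQN h, LinearMap.comp_zero, LinearMap.zero_comp]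
  obtain ⟨T, hT, hfT⟩ := (eq_top_or_exists_le_coatom (LinearMap.range f)).resolve_left hftop
  have hsimple : IsSimpleModule R (W.1.M ⧸ T) := isSimpleModule_iff_isCoatom.2 hT
  have := hsimple.nontrivial
  refine ⟨⟨toModA R (W.1.M ⧸ T), isIndecMod_of_isSimpleModule⟩, T.mkQ ∘ₗ g, ?_,
    .tail (.single ⟨f, hf⟩) ⟨T.mkQ, LinearMap.ne_zero_of_surjective T.mkQ_surjective⟩⟩
  rw [← LinearMap.range_eq_top, LinearMap.range_comp, Submodule.map_mkQ_eq_top, eq_top_iff, ← hfg]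
  exact sup_le_sup_right hfT _

lemma exists_lift_quotient [Module.Projective R P] {H : Submodule R P} (θ : P ⧸ H →ₗ[R] S)
    {η : X →ₗ[R] S} (hη : Function.Surjective η) (hH : ∀ φ : P →ₗ[R] X, H ≤ LinearMap.ker φ) :
    ∃ ψ : P ⧸ H →ₗ[R] X, η ∘ₗ ψ = θ := by
  obtain ⟨ψ, hψ⟩ := Module.projective_lifting_property η (θ ∘ₗ H.mkQ) hη
  exact ⟨H.liftQ ψ (hH ψ), Submodule.linearMap_qext _
    (by rw [LinearMap.comp_assoc, Submodule.liftQ_mkQ, hψ])⟩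

lemma exists_homStep_of_summand [Module.Projective R P]
    (hP : ∀ (S : Type u) [AddCommGroup S] [Module R S], IsSimpleModule R S →
      (∃ φ : P →ₗ[R] S, φ ≠ 0) → ∃ N : IndecModA R, ARVertex.mk N ∈ Γ ∧ IsCompFactorMod R S N.1.M)
    {H : Submodule R P}
    (hH : ∀ N : IndecModA R, ARVertex.mk N ∈ Γ → ∀ φ : P →ₗ[R] N.1.M, H ≤ LinearMap.ker φ)
    {V : IndecModA R} {i : V.1.M →ₗ[R] P ⧸ H} {p : P ⧸ H →ₗ[R] V.1.M}
    (hpi : p ∘ₗ i = LinearMap.id) :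
    ∃ M : IndecModA R, ARVertex.mk M ∈ Γ ∧ HomStep V M := by
  have := V.2.1
  obtain ⟨L, hL⟩ := exists_simple_quotient R V.1.M
  have := hL.nontrivial
  have hp : Function.Surjective p := LinearMap.surjective_of_comp_eq_id i p hpi
  obtain ⟨M, hM, hLM⟩ := hP (V.1.M ⧸ L) hL ⟨L.mkQ ∘ₗ p ∘ₗ H.mkQ, LinearMap.ne_zero_of_surjective
    (L.mkQ_surjective.comp (hp.comp H.mkQ_surjective))⟩
  obtain ⟨M', η, hη⟩ := isCompFactorMod_iff.1 hLM
  obtain ⟨ψ, hψ⟩ := exists_lift_quotient (L.mkQ ∘ₗ p) hη fun φ x hx ↦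
    Subtype.ext (hH M hM (M'.subtype ∘ₗ φ) hx)
  refine ⟨M, hM, M'.subtype ∘ₗ ψ ∘ₗ i, fun h0 ↦
    LinearMap.ne_zero_of_surjective L.mkQ_surjective ?_⟩
  have hψi : ψ ∘ₗ i = 0 := LinearMap.ext fun v ↦ Subtype.ext (LinearMap.congr_fun h0 v)
  rw [← LinearMap.comp_id L.mkQ, ← hpi, ← LinearMap.comp_assoc, ← hψ, LinearMap.comp_assoc, hψi,
    LinearMap.comp_zero]

lemma exists_hom_quotient_map_ker {Y : Submodule R P} {Z : Type u} [AddCommGroup Z] [Module R Z]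
    [Nontrivial Z] {μ : Y →ₗ[R] Z} (hμ : Function.Surjective μ) :
    ∃ h : Z →ₗ[R] P ⧸ (LinearMap.ker μ).map Y.subtype, h ≠ 0 := by
  let H := (LinearMap.ker μ).map Y.subtype
  let h := (LinearMap.ker μ).mapQ H Y.subtype (Submodule.le_comap_map _ _)
  have hinj : Function.Injective h := by
    rw [← LinearMap.ker_eq_bot, Submodule.ker_mapQ,
      Submodule.comap_map_eq_of_injective Y.subtype_injective, Submodule.mkQ_map_self]
  let e := μ.quotKerEquivOfSurjective hμ
  exact ⟨h ∘ₗ e.symm.toLinearMap, LinearMap.ne_zero_of_injective (hinj.comp e.symm.injective)⟩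

lemma exists_homPath_from_quotient [IsNoetherian R P] [IsArtinian R P] [Module.Projective R P]
    (hP : ∀ (S : Type u) [AddCommGroup S] [Module R S], IsSimpleModule R S →
      (∃ φ : P →ₗ[R] S, φ ≠ 0) → ∃ N : IndecModA R, ARVertex.mk N ∈ Γ ∧ IsCompFactorMod R S N.1.M)
    {Y : Submodule R P}
    (hY : ∀ N : IndecModA R, ARVertex.mk N ∈ Γ → ∀ φ : P →ₗ[R] N.1.M, Y ≤ LinearMap.ker φ)
    {Z : IndecModA R} {μ : Y →ₗ[R] Z.1.M} (hμ : Function.Surjective μ) :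
    ∃ M : IndecModA R, ARVertex.mk M ∈ Γ ∧ Relation.ReflTransGen HomStep Z M := by
  have := Z.2.1
  obtain ⟨h, hh⟩ := exists_hom_quotient_map_ker hμ
  obtain ⟨V, i, p, hpi, hph⟩ := exists_indec_summand_comp_ne_zero (Z := toModA R (P ⧸ _)) hh
  obtain ⟨M, hM, hVM⟩ := exists_homStep_of_summand hP
    (fun N hN φ ↦ (Submodule.map_subtype_le _ _).trans (hY N hN φ)) hpi
  exact ⟨M, hM, .tail (.single ⟨_, hph⟩) hVM⟩

theorem comp_eq_zero_of_isCycleFiniteCyclicComponent [IsNoetherian R P] [IsArtinian R P]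
    [Module.Projective R P] [Module.Projective R Q] (hΓ : IsCycleFiniteCyclicComponent Γ)
    (hP : ∀ (S : Type u) [AddCommGroup S] [Module R S], IsSimpleModule R S →
      (∃ φ : P →ₗ[R] S, φ ≠ 0) → ∃ N : IndecModA R, ARVertex.mk N ∈ Γ ∧ IsCompFactorMod R S N.1.M)
    (hQ : ∀ N : IndecModA R, ARVertex.mk N ∈ Γ → ∀ φ : Q →ₗ[R] N.1.M, φ = 0)
    (α : Q →ₗ[R] P) (β : P →ₗ[R] Q) : α ∘ₗ β = 0 := by
  by_contra hαβ
  have hβ : α.rangeRestrict ∘ₗ β ≠ 0 := fun h ↦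
    hαβ (LinearMap.ext fun x ↦ congrArg Subtype.val (LinearMap.congr_fun h x))
  obtain ⟨L, hL, hLα, hLβ⟩ := exists_simple_quotient_range hβ
  have := hL.nontrivial
  obtain ⟨N, hN, hLN⟩ := hP _ hL ⟨_, hLβ⟩
  obtain ⟨Z, μ, hμ, hNZ⟩ :=
    exists_homPath_to_quotient (hQ N hN) α.surjective_rangeRestrict hLN hLα
  have hrange (N' : IndecModA R) (hN' : ARVertex.mk N' ∈ Γ) (φ : P →ₗ[R] N'.1.M) :
      LinearMap.range α ≤ LinearMap.ker φ := LinearMap.range_le_ker_iff.2 (hQ N' hN' (φ ∘ₗ α))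
  obtain ⟨M, hM, hZM⟩ := exists_homPath_from_quotient hP hrange hμ
  have := Z.2.1
  exact LinearMap.ne_zero_of_surjective (f := μ ∘ₗ α.rangeRestrict)
    (hμ.comp α.surjective_rangeRestrict)
    (hQ Z (mem_of_homPath_of_homPath hΓ hN hM hNZ hZM) (μ ∘ₗ α.rangeRestrict))

end VanishingComposites

section ProjectiveCovers

variable {R : Type u} [Ring R] {S : Type u} [AddCommGroup S] [Module R S]

lemma bijective_of_comp_eq_self {X : ModA R} (hX : X.IsIndec) {θ : X.M →ₗ[R] S} (hθ : θ ≠ 0)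
    {φ : Module.End R X.M} (hφ : θ ∘ₗ φ = θ) : Function.Bijective φ := by
  refine (bijective_or_isNilpotent hX φ).resolve_right fun ⟨n, hn⟩ ↦ hθ ?_
  have hpow : ∀ n : ℕ, θ ∘ₗ φ ^ n = θ := fun n ↦ by
    induction n with
    | zero => exact LinearMap.comp_id θ
    | succ n ih => rw [pow_succ', Module.End.mul_eq_comp, ← LinearMap.comp_assoc, hφ, ih]
  rw [← hpow n, hn, LinearMap.comp_zero]

lemma iso_of_projective_of_ne_zero [IsSimpleModule R S] {V W : IndecModA R}
    [Module.Projective R V.1.M] [Module.Projective R W.1.M] {θ : V.1.M →ₗ[R] S}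
    {η : W.1.M →ₗ[R] S} (hθ : θ ≠ 0) (hη : η ≠ 0) : V.1.Iso W.1 := by
  obtain ⟨a, ha⟩ := Module.projective_lifting_property η θ (LinearMap.surjective_of_ne_zero hη)
  obtain ⟨b, hb⟩ := Module.projective_lifting_property θ η (LinearMap.surjective_of_ne_zero hθ)
  have hba : Function.Bijective (b ∘ₗ a) :=
    bijective_of_comp_eq_self V.2 hθ (by rw [← LinearMap.comp_assoc, hb, ha])
  exact ⟨.ofBijective a (bijective_of_splitMonoMap V.2 W.2 (splitMonoMap_of_bijective_comp hba))⟩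

end ProjectiveCovers

section RegularModule

variable {A : Type u} [Ring A]

/-- The right module `A` as the regular left module over `Aᵐᵒᵖ`. -/
def regularEquiv (A : Type u) [Ring A] : A ≃ₗ[Aᵐᵒᵖ] Aᵐᵒᵖ where
  __ := MulOpposite.opAddEquiv
  map_smul' _ _ := rfl

instance [IsArtinianRing Aᵐᵒᵖ] : IsArtinian Aᵐᵒᵖ A :=
  isArtinian_of_linearEquiv (regularEquiv A).symm

instance [IsArtinianRing Aᵐᵒᵖ] : IsNoetherian Aᵐᵒᵖ A :=
  isNoetherian_of_linearEquiv (regularEquiv A).symm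

instance : Module.Projective Aᵐᵒᵖ A :=
  .of_equiv (regularEquiv A).symm

lemma map_eq_map_one_mul (f : A →ₗ[Aᵐᵒᵖ] A) (a : A) : f a = f 1 * a := by
  simpa using f.map_smul (MulOpposite.op a) 1

section Summands

variable {V : Type u} [AddCommGroup V] [Module Aᵐᵒᵖ V] {i : V →ₗ[Aᵐᵒᵖ] A} {p : A →ₗ[Aᵐᵒᵖ] V}

lemma range_eq_span_of_comp_eq_id (hpi : p ∘ₗ i = LinearMap.id) :
    LinearMap.range i = Submodule.span Aᵐᵒᵖ {i (p 1)} := by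
  refine le_antisymm ?_ ((Submodule.span_singleton_le_iff_mem _ _).2 ⟨_, rfl⟩)
  rintro _ ⟨v, rfl⟩
  refine Submodule.mem_span_singleton.2 ⟨MulOpposite.op (i v), ?_⟩
  rw [op_smul_eq_mul, ← LinearMap.comp_apply, ← map_eq_map_one_mul, LinearMap.comp_apply]
  exact congrArg i (LinearMap.congr_fun hpi v)

lemma isPrimitiveIdempotent_of_comp_eq_id (hV : IsIndecMod Aᵐᵒᵖ V) (hpi : p ∘ₗ i = LinearMap.id) :
    IsPrimitiveIdempotent A (i (p 1)) := by
  have hpi' (v : V) : p (i v) = v := LinearMap.congr_fun hpi v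
  have hip (a : A) : i (p a) = i (p 1) * a := map_eq_map_one_mul (i ∘ₗ p) a
  have := hV.1
  obtain ⟨v, hv⟩ := exists_ne (0 : V)
  refine ⟨(hip _).symm.trans (congrArg i (hpi' _)), fun h0 ↦ hv ?_, fun f g hf _ hfg hgf hsum ↦ ?_⟩
  · rw [← hpi' v, ← hpi' v, hip, h0, zero_mul, map_zero]
  have hef : i (p 1) * f = f := by rw [hsum, add_mul, hf, hgf, add_zero]
  have hfe : f * i (p 1) = f := by rw [hsum, mul_add, hf, hfg, add_zero]
  let φ : V →ₗ[Aᵐᵒᵖ] V := p ∘ₗ LinearMap.mulLeft Aᵐᵒᵖ f ∘ₗ i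
  have hφ (v : V) : i (φ v) = f * i v := by
    change i (p (f * i v)) = f * i v
    rw [hip, ← mul_assoc, hef]
  have hφφ : φ ∘ₗ φ = φ := LinearMap.ext fun v ↦ Function.LeftInverse.injective hpi' <| by
    rw [LinearMap.comp_apply, hφ, hφ, ← mul_assoc, hf]
  refine (hV.2 φ hφφ).imp (fun h ↦ ?_) fun h ↦ ?_
  · rw [← hfe, ← hφ, h, LinearMap.zero_apply, map_zero]
  · rw [← hfe, ← hφ, h] at hsum
    exact left_eq_add.1 hsum

lemma not_nonempty_linearEquiv_of_isBasicAlgebra (hA : IsBasicAlgebra A) {W : Type u}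
    [AddCommGroup W] [Module Aᵐᵒᵖ W] {j : W →ₗ[Aᵐᵒᵖ] A} {q : A →ₗ[Aᵐᵒᵖ] W}
    (hV : IsIndecMod Aᵐᵒᵖ V) (hW : IsIndecMod Aᵐᵒᵖ W) (hpi : p ∘ₗ i = LinearMap.id)
    (hqj : q ∘ₗ j = LinearMap.id) (hpj : p ∘ₗ j = 0) (hqi : q ∘ₗ i = 0) :
    ¬ Nonempty (V ≃ₗ[Aᵐᵒᵖ] W) := fun ⟨e⟩ ↦ by
  refine hA ⟨i (p 1), j (q 1), isPrimitiveIdempotent_of_comp_eq_id hV hpi,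
    isPrimitiveIdempotent_of_comp_eq_id hW hqj, ?_, ?_, ?_⟩
  · exact (map_eq_map_one_mul (i ∘ₗ p) _).symm.trans <|
      (congrArg i (LinearMap.congr_fun hpj _)).trans (map_zero i)
  · exact (map_eq_map_one_mul (j ∘ₗ q) _).symm.trans <|
      (congrArg j (LinearMap.congr_fun hqi _)).trans (map_zero j)
  · rw [← range_eq_span_of_comp_eq_id hpi, ← range_eq_span_of_comp_eq_id hqj]
    exact ⟨(LinearEquiv.ofInjective i (LinearMap.injective_of_comp_eq_id i p hpi)).symm ≪≫ₗ e ≪≫ₗ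
      LinearEquiv.ofInjective j (LinearMap.injective_of_comp_eq_id j q hqj)⟩

end Summands

variable {P Q : Submodule Aᵐᵒᵖ A}

lemma projective_of_isCompl (hPQ : IsCompl P Q) : Module.Projective Aᵐᵒᵖ P :=
  .of_split P.subtype (P.projectionOnto Q hPQ) (Submodule.projectionOnto_comp_subtype hPQ)

lemma eq_zero_or_eq_zero_of_isBasicAlgebra [IsArtinianRing Aᵐᵒᵖ] (hA : IsBasicAlgebra A)
    (hPQ : IsCompl P Q) {S : Type u} [AddCommGroup S] [Module Aᵐᵒᵖ S] [IsSimpleModule Aᵐᵒᵖ S]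
    (θ : P →ₗ[Aᵐᵒᵖ] S) (η : Q →ₗ[Aᵐᵒᵖ] S) : θ = 0 ∨ η = 0 := by
  have := projective_of_isCompl hPQ
  have := projective_of_isCompl hPQ.symm
  by_contra! ⟨hθ, hη⟩
  obtain ⟨V, i, p, hpi, hθi⟩ := exists_indec_summand_ne_zero_comp (Z := toModA Aᵐᵒᵖ P) hθ
  obtain ⟨W, j, q, hqj, hηj⟩ := exists_indec_summand_ne_zero_comp (Z := toModA Aᵐᵒᵖ Q) hη
  have : Module.Projective Aᵐᵒᵖ V.1.M := .of_split i p hpi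
  have : Module.Projective Aᵐᵒᵖ W.1.M := .of_split j q hqj
  refine not_nonempty_linearEquiv_of_isBasicAlgebra (i := P.subtype ∘ₗ i) (j := Q.subtype ∘ₗ j)
    (p := p ∘ₗ P.projectionOnto Q hPQ) (q := q ∘ₗ Q.projectionOnto P hPQ.symm) hA V.2 W.2
    (LinearMap.ext fun v ↦ ?_) (LinearMap.ext fun w ↦ ?_) (LinearMap.ext fun w ↦ ?_)
    (LinearMap.ext fun v ↦ ?_) (iso_of_projective_of_ne_zero hθi hηj)
  · simpa using LinearMap.congr_fun hpi v
  · simpa using LinearMap.congr_fun hqj w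
  · simp
  · simp

end RegularModule

/-! ### Compression to a summand -/

section Compression

variable {R M : Type*} [Ring R] [AddCommGroup M] [Module R M] {P Q : Submodule R M}

/-- Compression `f ↦ p ∘ f ∘ i` of endomorphisms of `M = P ⊕ Q` to the summand `P`. It is
multiplicative because the composites `P → Q → P` vanish. -/
noncomputable def compressEnd (hPQ : IsCompl P Q)
    (h0 : ∀ (α : Q →ₗ[R] P) (β : P →ₗ[R] Q), α ∘ₗ β = 0) :
    Module.End R M →+* Module.End R P where
  toFun f := P.projectionOnto Q hPQ ∘ₗ f ∘ₗ P.subtype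
  map_one' := Submodule.projectionOnto_comp_subtype hPQ
  map_zero' := by rw [LinearMap.zero_comp, LinearMap.comp_zero]
  map_add' f g := by rw [LinearMap.add_comp, LinearMap.comp_add]
  map_mul' f g := LinearMap.ext fun x ↦ by
    have h := LinearMap.congr_fun (h0 (P.projectionOnto Q hPQ ∘ₗ f ∘ₗ Q.subtype)
      (Q.projectionOnto P hPQ.symm ∘ₗ g ∘ₗ P.subtype)) x
    have hg := Submodule.projection_add_projection_eq_self hPQ (g x)
    change P.projectionOnto Q hPQ (f (g x)) = _
    rw [← hg, map_add, map_add]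
    exact add_eq_left.2 h

lemma compressEnd_surjective (hPQ : IsCompl P Q)
    (h0 : ∀ (α : Q →ₗ[R] P) (β : P →ₗ[R] Q), α ∘ₗ β = 0) :
    Function.Surjective (compressEnd hPQ h0) := fun ψ ↦
  ⟨P.subtype ∘ₗ ψ ∘ₗ P.projectionOnto Q hPQ, LinearMap.ext fun x ↦ by simp [compressEnd]⟩

end Compression

section TraceIdeals

variable {A : Type u} [Ring A] {P Q : Submodule Aᵐᵒᵖ A}

lemma mem_traceIdeal {x : A} (hx : x ∈ Q) : x ∈ traceIdeal A Q :=
  TwoSidedIdeal.subset_span (Set.mem_iUnion.2 ⟨Q.subtype, ⟨x, hx⟩, rfl⟩)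

lemma traceIdeal_eq_ker_compressEnd (hPQ : IsCompl P Q)
    (h0 : ∀ (α : Q →ₗ[Aᵐᵒᵖ] P) (β : P →ₗ[Aᵐᵒᵖ] Q), α ∘ₗ β = 0) :
    traceIdeal A Q = TwoSidedIdeal.ker
      ((compressEnd hPQ h0).comp (RingEquiv.moduleEndSelfOp A : A →+* Module.End Aᵐᵒᵖ A)) := by
  refine le_antisymm (TwoSidedIdeal.span_le.2 ?_) fun a ha ↦ ?_
  · rintro _ hz
    obtain ⟨g, q, rfl⟩ := Set.mem_iUnion.1 hz
    refine (TwoSidedIdeal.mem_ker _).2 (LinearMap.ext fun x ↦ ?_)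
    let lmulQ : P →ₗ[Aᵐᵒᵖ] Q :=
      Q.projectionOnto P hPQ.symm ∘ₗ LinearMap.mulLeft Aᵐᵒᵖ (q : A) ∘ₗ P.subtype
    have hlmulQ : lmulQ x = MulOpposite.op (x : A) • q :=
      Submodule.projectionOnto_apply_left hPQ.symm (MulOpposite.op (x : A) • q)
    calc P.projectionOnto Q hPQ (g q * x) = P.projectionOnto Q hPQ (g (lmulQ x)) := by
          rw [hlmulQ, map_smul, op_smul_eq_mul]
      _ = 0 := LinearMap.congr_fun (h0 (P.projectionOnto Q hPQ ∘ₗ g) lmulQ) x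
  · have ha1 : P.projectionOnto Q hPQ (a * P.projectionOnto Q hPQ 1) = 0 :=
      LinearMap.congr_fun ((TwoSidedIdeal.mem_ker _).1 ha) (P.projectionOnto Q hPQ 1)
    rw [← mul_one a, ← Submodule.projection_add_projection_eq_self hPQ (1 : A), mul_add]
    exact add_mem (mem_traceIdeal ((Submodule.projectionOnto_apply_eq_zero_iff hPQ).1 ha1))
      (TwoSidedIdeal.mul_mem_left _ _ _ (mem_traceIdeal (Subtype.prop _)))

theorem nonempty_quotient_traceIdeal_ringEquiv_end (hPQ : IsCompl P Q)
    (h0 : ∀ (α : Q →ₗ[Aᵐᵒᵖ] P) (β : P →ₗ[Aᵐᵒᵖ] Q), α ∘ₗ β = 0) :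
    Nonempty ((traceIdeal A Q).ringCon.Quotient ≃+* Module.End Aᵐᵒᵖ P) := by
  let Φ := (compressEnd hPQ h0).comp (RingEquiv.moduleEndSelfOp A : A →+* Module.End Aᵐᵒᵖ A)
  have hker : (traceIdeal A Q).ringCon = RingCon.ker Φ :=
    congrArg TwoSidedIdeal.ringCon (traceIdeal_eq_ker_compressEnd hPQ h0)
  have hsurj : Function.Surjective Φ :=
    (compressEnd_surjective hPQ h0).comp (RingEquiv.moduleEndSelfOp A).surjective
  exact ⟨.ofBijective ((traceIdeal A Q).ringCon.lift Φ hker.le)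
    (RingCon.lift_bijective_iff.2 ⟨hker, hsurj⟩)⟩

end TraceIdeals

section Main

variable {A : Type u} [Ring A] [IsArtinianRing Aᵐᵒᵖ] {Γ : Set (ARVertex Aᵐᵒᵖ)}

lemma exists_ne_zero_iff_exists_isCompFactorMod (D : GammaDecomp A Γ) {S : Type u} [AddCommGroup S]
    [Module Aᵐᵒᵖ S] [IsSimpleModule Aᵐᵒᵖ S] :
    (∃ φ : D.P →ₗ[Aᵐᵒᵖ] S, φ ≠ 0) ↔
      ∃ N : IndecModA Aᵐᵒᵖ, ARVertex.mk N ∈ Γ ∧ IsCompFactorMod Aᵐᵒᵖ S N.1.M := by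
  rw [← isCompFactorMod_quotient_modRadical_iff, D.top_factors S ‹_›]
  exact ⟨fun ⟨_, hx, N, hN, h⟩ ↦ ⟨N, hN ▸ hx, h⟩, fun ⟨N, hN, h⟩ ↦ ⟨_, hN, N, rfl, h⟩⟩

lemma hom_eq_zero_of_mem_component (hA : IsBasicAlgebra A) (D : GammaDecomp A Γ)
    {N : IndecModA Aᵐᵒᵖ} (hN : ARVertex.mk N ∈ Γ) (φ : D.Q →ₗ[Aᵐᵒᵖ] N.1.M) : φ = 0 := by
  by_contra hφ
  obtain ⟨L, _, hLN, hL⟩ := exists_simple_quotient_range hφ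
  obtain ⟨θ, hθ⟩ := (exists_ne_zero_iff_exists_isCompFactorMod D).2 ⟨N, hN, hLN⟩
  exact (eq_zero_or_eq_zero_of_isBasicAlgebra hA D.compl θ _).elim hθ hL

end Main

end SupportAlgebra

open SupportAlgebra in
theorem support_algebra_iso_end_general
    (A : Type u) [Ring A] [IsArtinianRing Aᵐᵒᵖ] (hbasic : IsBasicAlgebra A)
    (Γ : Set (ARVertex Aᵐᵒᵖ)) (hΓ : IsCycleFiniteCyclicComponent Γ) (D : GammaDecomp A Γ) :
    Nonempty ((traceIdeal A D.Q).ringCon.Quotient ≃+* Module.End Aᵐᵒᵖ ↥D.P) := by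
  have := projective_of_isCompl D.compl
  have := projective_of_isCompl D.compl.symm
  exact nonempty_quotient_traceIdeal_ringEquiv_end D.compl
    (comp_eq_zero_of_isCycleFiniteCyclicComponent hΓ
      (fun _ _ _ _ ↦ (exists_ne_zero_iff_exists_isCompFactorMod D).1)
      fun _ ↦ hom_eq_zero_of_mem_component hbasic D)

/-- **Proposition (support algebra as endomorphism algebra).** Let `A` be a basic
indecomposable artin algebra, `Γ` a cycle-finite component of `_cΓ_A`, and
`A = P_Γ ⊕ Q_Γ` a decomposition such that the simple summands of `P_Γ / rad P_Γ` are
exactly the simple composition factors of the modules in `Γ`. Then the algebras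
`supp(Γ) = A / t_A(Γ)` and `End_A(P_Γ)` are isomorphic. -/
theorem support_algebra_iso_end
    (K A : Type u) [CommRing K] [IsArtinianRing K] [Ring A] [Algebra K A]
    [Module.Finite K A] (hbasic : IsBasicAlgebra A) (hconn : IsConnectedAlgebra A)
    (Γ : Set (ARVertex Aᵐᵒᵖ)) (hΓ : IsCycleFiniteCyclicComponent Γ)
    (D : GammaDecomp A Γ) :
    Nonempty ((traceIdeal A D.Q).ringCon.Quotient ≃+* Module.End Aᵐᵒᵖ ↥D.P) :=
  have := IsArtinianRing.of_finite K Aᵐᵒᵖ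
  support_algebra_iso_end_general A hbasic Γ hΓ D
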